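/- arXiv:1208.2536 — 10 statements merged into one kernel-verified Lean document; each statement's English description precedes it below -/
import Mathlib

section
/- Fix a real number β > 0 and a real number γ with γ ≠ 0 and γ² ≠ 1. Then the polynomials defined for n ∈ ℕ and x ∈ ℝ by p_{2n}(x) = (−γ)^{−n} · √((β)_n / n!) · ∑_{j=0}^{n} (−n)_j (x²/(1−γ²))_j (1−γ²)^j / ((β)_j j!) and p_{2n+1}(x) = x · (−γ)^{−n} · √((β+1)_n / (n! β)) · ∑_{j=0}^{n} (−n)_j (x²/(1−γ²)+1)_j (1−γ²)^j / ((β+1)_j j!) satisfy p_0(x) = 1 and, for all n ≥ 0 (with the convention p_{−1}(x) = 0), the three-term recurrences x·p_{2n}(x) = S_n·p_{2n−1}(x) + R_n·p_{2n+1}(x) and x·p_{2n+1}(x) = R_n·p_{2n}(x) + S_{n+1}·p_{2n+2}(x), where R_n = √(β+n) and S_n = γ√n. -/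
/-!
Put `z = 1 - γ²`, `a = x² / z`, `E_n = ₂F₁(-n, a; β; z)`, `O_n = ₂F₁(-n, a + 1; β + 1; z)`. Stripping the
normalising factors (`poch_succ'` relates `(β+1)_n` to `(β)_n`), the two recurrences become the
contiguous relations
`β E_n = (β + n) O_n - n (1 - z) O_{n-1}` and `a z O_n = β (E_n - E_{n+1})`.
Each one follows by comparing powers of `z`. This comparison is made on truncated sums with an
arbitrary first parameter `c` (`hyp_contig_even`, `hyp_contig_odd`), where an induction on the
truncation length works; at `c = -n` the boundary terms contain `(-n)_j` with `j > n` and vanish.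
-/

noncomputable section

open Finset

/-- Pochhammer symbol `(a)_n = a(a+1)⋯(a+n-1)`. -/
def poch (a : ℝ) : ℕ → ℝ
  | 0 => 1
  | n + 1 => poch a n * (a + n)

/-- The product `(a)_n` with its first factor, rather than its last, split off. -/
lemma poch_succ' (a : ℝ) (n : ℕ) : poch a (n + 1) = a * poch (a + 1) n := by
  induction n with
  | zero => simp [poch]
  | succ k ih =>
    rw [poch, ih, poch]
    push_cast
    ring

lemma poch_neg_nat (n : ℕ) : poch (-(n : ℝ)) (n + 1) = 0 := by
  simp [poch]

lemma poch_pos {a : ℝ} (ha : 0 < a) (n : ℕ) : 0 < poch a n := by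
  induction n with
  | zero => simp [poch]
  | succ k ih => rw [poch]; positivity

/-- The sum of the first `N` terms of the Gauss series `₂F₁(c, a; b; z)`. -/
def hyp (c a b z : ℝ) (N : ℕ) : ℝ :=
  ∑ j ∈ range N, poch c j * poch a j * z ^ j / (poch b j * j.factorial)

lemma hyp_succ (c a b z : ℝ) (N : ℕ) : hyp c a b z (N + 1) =
    hyp c a b z N + poch c N * poch a N * z ^ N / (poch b N * N.factorial) := by
  simp [hyp, sum_range_succ]

/-- For `c = -n` the series terminates, so one extra term changes nothing. -/
lemma hyp_terminate (n : ℕ) (a b z : ℝ) :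
    hyp (-(n : ℝ)) a b z (n + 2) = hyp (-(n : ℝ)) a b z (n + 1) := by
  rw [hyp_succ _ _ _ _ (n + 1), poch_neg_nat]
  simp

/-- Truncated form of `β F(c, a; β) = (β - c) F(c, a+1; β+1) + c (1 - z) F(c+1, a+1; β+1)`,
with its boundary term. -/
lemma hyp_contig_even (c a z : ℝ) {β : ℝ} (hβ : 0 < β) (N : ℕ) :
    (β - c) * hyp c (a + 1) (β + 1) z (N + 1)
      + c * (1 - z) * hyp (c + 1) (a + 1) (β + 1) z (N + 1)
    = β * hyp c a β z (N + 1)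
      - poch c (N + 1) * poch (a + 1) N * z ^ (N + 1) / (poch (β + 1) N * N.factorial) := by
  induction N with
  | zero =>
    simp [hyp, poch]
    ring
  | succ k ih =>
    rw [hyp_succ c (a + 1), hyp_succ (c + 1), hyp_succ c a, mul_add, mul_add, mul_add]
    have hB := (poch_pos (show 0 < β + 1 by linarith) k).ne'
    have hf : (k.factorial : ℝ) ≠ 0 := by positivity
    have hk : β + 1 + k ≠ 0 := by positivity
    have hk1 : (k : ℝ) + 1 ≠ 0 := by positivity
    -- `c (c+1)_{k+1} = (c)_{k+1} (c+k+1)` makes every term a multiple of `(c)_{k+1}`.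
    have hc : c * poch (c + 1) (k + 1) = poch c (k + 1) * (c + (k + 1)) := by
      rw [← poch_succ', poch]
      push_cast
      ring
    have key : (β - c) * (poch c (k + 1) * poch (a + 1) (k + 1) * z ^ (k + 1) /
          (poch (β + 1) (k + 1) * (k + 1).factorial))
        + c * (1 - z) * (poch (c + 1) (k + 1) * poch (a + 1) (k + 1) * z ^ (k + 1) /
          (poch (β + 1) (k + 1) * (k + 1).factorial))
        = β * (poch c (k + 1) * poch a (k + 1) * z ^ (k + 1) /
          (poch β (k + 1) * (k + 1).factorial))
        + poch c (k + 1) * poch (a + 1) k * z ^ (k + 1) / (poch (β + 1) k * k.factorial)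
        - poch c (k + 1 + 1) * poch (a + 1) (k + 1) * z ^ (k + 1 + 1) /
          (poch (β + 1) (k + 1) * (k + 1).factorial) := by
      have e : c * (1 - z) * (poch (c + 1) (k + 1) * poch (a + 1) (k + 1) * z ^ (k + 1) /
          (poch (β + 1) (k + 1) * (k + 1).factorial)) =
          (1 - z) * ((c * poch (c + 1) (k + 1)) * poch (a + 1) (k + 1) * z ^ (k + 1) /
          (poch (β + 1) (k + 1) * (k + 1).factorial)) := by ring
      rw [e, hc, poch_succ' a, poch_succ' β, Nat.factorial_succ]
      rw [show poch c (k + 1 + 1) = poch c (k + 1) * (c + ((k + 1 : ℕ) : ℝ)) from rfl]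
      rw [show poch (a + 1) (k + 1) = poch (a + 1) k * (a + 1 + k) from rfl,
        show poch (β + 1) (k + 1) = poch (β + 1) k * (β + 1 + k) from rfl]
      push_cast
      field_simp
      ring
    linarith

/-- Truncated form of `a z F(c, a+1; β+1) = β (F(c, a; β) - F(c-1, a; β))`. -/
lemma hyp_contig_odd (c a z : ℝ) {β : ℝ} (hβ : 0 < β) (N : ℕ) :
    a * z * hyp c (a + 1) (β + 1) z N
    = β * (hyp c a β z (N + 1) - hyp (c - 1) a β z (N + 1)) := by
  induction N with
  | zero => simp [hyp, poch]
  | succ k ih =>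
    rw [hyp_succ c (a + 1), hyp_succ c a, hyp_succ (c - 1), mul_add, ih]
    have hB := (poch_pos (show 0 < β + 1 by linarith) k).ne'
    have hf : (k.factorial : ℝ) ≠ 0 := by positivity
    have hk1 : (k : ℝ) + 1 ≠ 0 := by positivity
    have hc : poch (c - 1) (k + 1) = (c - 1) * poch c k := by
      rw [poch_succ', sub_add_cancel]
    rw [hc, poch_succ' a, poch_succ' β, Nat.factorial_succ, poch]
    push_cast
    field_simp
    ring

/-- The odd normalisation `√((β+1)_n / (n! β))` in terms of the even one. -/
lemma sqrt_odd_weight {β : ℝ} (hβ : 0 < β) (n : ℕ) :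
    √(poch (β + 1) n / (n.factorial * β)) = √(poch β n / n.factorial) * √(β + n) / β := by
  have h : poch (β + 1) n = poch β n * (β + n) / β := by
    rw [eq_div_iff hβ.ne', mul_comm, ← poch_succ', poch]
  have hP := poch_pos hβ n
  rw [h, show poch β n * (β + n) / β / (n.factorial * β)
    = (poch β n / n.factorial) * (β + n) / β ^ 2 by field_simp,
    Real.sqrt_div (by positivity), Real.sqrt_sq hβ.le, Real.sqrt_mul (by positivity)]

lemma sqrt_even_weight_succ {β : ℝ} (hβ : 0 < β) (n : ℕ) :
    √(n + 1) * √(poch β (n + 1) / (n + 1).factorial) = √(poch β n / n.factorial) * √(β + n) := by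
  have hP := poch_pos hβ n
  rw [← Real.sqrt_mul (by positivity), ← Real.sqrt_mul (by positivity), poch, Nat.factorial_succ]
  congr 1
  push_cast
  field_simp

theorem stmt_0 (β γ : ℝ) (hβ : 0 < β) (hγ : γ ≠ 0) (hγ2 : γ ^ 2 ≠ 1)
    (p : ℕ → ℝ → ℝ)
    (hpe : ∀ (n : ℕ) (x : ℝ), p (2 * n) x =
      (-γ) ^ (-(n : ℤ)) * Real.sqrt (poch β n / n.factorial) *
      ∑ j ∈ range (n + 1),
        poch (-(n : ℝ)) j * poch (x ^ 2 / (1 - γ ^ 2)) j * (1 - γ ^ 2) ^ j /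
          (poch β j * j.factorial))
    (hpo : ∀ (n : ℕ) (x : ℝ), p (2 * n + 1) x =
      x * ((-γ) ^ (-(n : ℤ)) * Real.sqrt (poch (β + 1) n / (n.factorial * β)) *
      ∑ j ∈ range (n + 1),
        poch (-(n : ℝ)) j * poch (x ^ 2 / (1 - γ ^ 2) + 1) j * (1 - γ ^ 2) ^ j /
          (poch (β + 1) j * j.factorial))) :
    (∀ x : ℝ, p 0 x = 1) ∧
    (∀ (n : ℕ) (x : ℝ), x * p (2 * n) x =
      γ * Real.sqrt n * p (2 * n - 1) x + Real.sqrt (β + n) * p (2 * n + 1) x) ∧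
    (∀ (n : ℕ) (x : ℝ), x * p (2 * n + 1) x =
      Real.sqrt (β + n) * p (2 * n) x + γ * Real.sqrt (n + 1) * p (2 * n + 2) x) := by
  have hz : 1 - γ ^ 2 ≠ 0 := fun h => hγ2 (by linarith)
  have hγ' : -γ ≠ 0 := neg_ne_zero.mpr hγ
  have hpe' : ∀ (n : ℕ) (x : ℝ), p (2 * n) x = (-γ) ^ (-(n : ℤ)) * √(poch β n / n.factorial) *
      hyp (-(n : ℝ)) (x ^ 2 / (1 - γ ^ 2)) β (1 - γ ^ 2) (n + 1) := hpe
  have hpo' : ∀ (n : ℕ) (x : ℝ), p (2 * n + 1) x =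
      x * ((-γ) ^ (-(n : ℤ)) * (√(poch β n / n.factorial) * √(β + n) / β) *
      hyp (-(n : ℝ)) (x ^ 2 / (1 - γ ^ 2) + 1) (β + 1) (1 - γ ^ 2) (n + 1)) := by
    intro n x
    rw [← sqrt_odd_weight hβ]
    exact hpo n x
  have hpow : ∀ n : ℕ, (-γ) ^ (-(n : ℤ)) = -γ * (-γ) ^ (-((n + 1 : ℕ) : ℤ)) := by
    intro n
    rw [← zpow_one_add₀ hγ']
    congr 1
    push_cast
    ring
  have hsq : ∀ n : ℕ, √(β + n) * √(β + n) = β + n := fun n =>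
    Real.mul_self_sqrt (by positivity)
  refine ⟨fun x => ?_, fun n x => ?_, fun n x => ?_⟩
  · have h := hpe 0 x
    simpa [poch] using h
  · cases n with
    | zero =>
      -- The index `2 * 0 - 1` truncates to `0`, but its coefficient `√0` vanishes.
      have h := hpo' 0 x
      have h0 := hpe' 0 x
      have hs := hsq 0
      simp only [hyp, poch, Nat.cast_zero, mul_zero, zero_add, range_one, sum_singleton,
        add_zero] at h h0 hs ⊢
      rw [h, h0]
      simp only [Real.sqrt_zero, Nat.factorial_zero, neg_zero, zpow_zero, pow_zero, Nat.cast_one,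
        div_one, mul_one, one_mul, mul_zero, zero_mul, zero_add, Real.sqrt_one]
      field_simp
      linear_combination -x * hs
    | succ m =>
      rw [show 2 * (m + 1) - 1 = 2 * m + 1 by omega, hpe', hpo', hpo', hpow m]
      have hc := hyp_contig_even (-((m + 1 : ℕ) : ℝ)) (x ^ 2 / (1 - γ ^ 2)) (1 - γ ^ 2) hβ (m + 1)
      rw [poch_neg_nat, show -((m + 1 : ℕ) : ℝ) + 1 = -(m : ℝ) by push_cast; ring,
        hyp_terminate] at hc
      have hw := sqrt_even_weight_succ hβ m
      have hs := hsq (m + 1)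
      have hm : √((m + 1 : ℕ) : ℝ) * √((m + 1 : ℕ) : ℝ) = m + 1 := by
        rw [Real.mul_self_sqrt (by positivity)]
        push_cast
        ring
      have hcast : √((m : ℝ) + 1) = √((m + 1 : ℕ) : ℝ) := by push_cast; rfl
      rw [hcast] at hw
      rw [← hw]
      simp only [zero_mul, zero_div, sub_zero] at hc
      generalize hyp (-((m + 1 : ℕ) : ℝ)) (x ^ 2 / (1 - γ ^ 2)) β (1 - γ ^ 2) (m + 1 + 1) = E at *
      generalize hyp (-((m + 1 : ℕ) : ℝ)) (x ^ 2 / (1 - γ ^ 2) + 1) (β + 1) (1 - γ ^ 2)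
        (m + 1 + 1) = O at *
      generalize hyp (-(m : ℝ)) (x ^ 2 / (1 - γ ^ 2) + 1) (β + 1) (1 - γ ^ 2) (m + 1) = O' at *
      generalize (-γ) ^ (-((m + 1 : ℕ) : ℤ)) = g at *
      generalize √(poch β (m + 1) / (m + 1).factorial) = w at *
      generalize √(β + ((m + 1 : ℕ) : ℝ)) = r at *
      generalize √((m + 1 : ℕ) : ℝ) = s at *
      push_cast at hc hs
      field_simp
      linear_combination (-x * g * w) * hc - x * g * w * O * hs + x * g * w * γ ^ 2 * O' * hm
  · rw [show 2 * n + 2 = 2 * (n + 1) by ring, hpe', hpe', hpo', hpow n]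
    have hc := hyp_contig_odd (-(n : ℝ)) (x ^ 2 / (1 - γ ^ 2)) (1 - γ ^ 2) hβ (n + 1)
    rw [show -(n : ℝ) - 1 = -((n + 1 : ℕ) : ℝ) by push_cast; ring, hyp_terminate,
      div_mul_cancel₀ _ hz] at hc
    have hw := sqrt_even_weight_succ hβ n
    generalize hyp (-((n + 1 : ℕ) : ℝ)) (x ^ 2 / (1 - γ ^ 2)) β (1 - γ ^ 2) (n + 1 + 1) = E' at *
    generalize hyp (-(n : ℝ)) (x ^ 2 / (1 - γ ^ 2)) β (1 - γ ^ 2) (n + 1) = E at *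
    generalize hyp (-(n : ℝ)) (x ^ 2 / (1 - γ ^ 2) + 1) (β + 1) (1 - γ ^ 2) (n + 1) = O at *
    generalize (-γ) ^ (-((n + 1 : ℕ) : ℤ)) = g at *
    generalize √(poch β (n + 1) / (n + 1).factorial) = w' at *
    generalize √(poch β n / n.factorial) = w at *
    generalize √(β + (n : ℝ)) = r at *
    generalize √((n : ℝ) + 1) = s at *
    have hO : x ^ 2 * O / β = E - E' := by
      rw [div_eq_iff hβ.ne', hc]
      ring
    linear_combination (-γ * g * w * r) * hO - γ * g * E' * hw
end
end

section
/- Fix a real number β > 0 and let γ ∈ {1, −1} (so γ² = 1), and let p_n be the associated recurrence polynomials. Then for all m, n ∈ ℕ: ∫_{−∞}^{+∞} e^{−x²} |x|^{2β−1} p_n(x) p_m(x) dx = Γ(β) · δ_{m,n}, where Γ is the Gamma function and δ_{m,n} is the Kronecker delta; in particular the integrand is integrable on ℝ. -/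
/-!
The even moments of the weight `e^{-x²} |x|^{2β-1}` are `∫ x^{2k} = Γ(β + k)` and the odd ones vanish.
Since `γ² = 1`, the monic multiples `Q_n = (a_0 ⋯ a_{n-1}) p_n` of the recurrence polynomials do not
see `γ`: they satisfy `Q_{n+2} = x Q_{n+1} - b_n Q_n` with `b_{2n} = β + n` and `b_{2n+1} = n + 1`.

For a linear functional `L` on polynomials with the moments above, the recurrence gives the closed
forms (with `(k)_n = k (k-1) ⋯ (k-n+1)` the falling factorial)
`L(x^{2k} Q_{2n}) = Γ(β+k) (k)_n` and `L(x^{2k+1} Q_{2n+1}) = Γ(β+k+1) (k)_n`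
(`functional_closed_form`), while `L(x^j Q_n) = 0` for `j + n` odd (`functional_parity`). At `j = 0`
this says that `L(Q_n) = 0` for `n ≥ 1`, and then, as in Favard's theorem, the symmetry of
multiplication by `x` forces `L(Q_m Q_n) = δ_{mn} b_0 ⋯ b_{n-1} Γ(β)` (`functional_orthogonality`).
Dividing by `(a_0 ⋯ a_{n-1})² = b_0 ⋯ b_{n-1}` gives the orthogonality of the `p_n`.
-/

noncomputable section

open MeasureTheory Set Polynomial

/-- The off-diagonal Jacobi coefficients: `a_{2n} = √(β + n)` and `a_{2n+1} = γ √(n + 1)`, so that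
`x p_{n+1} = a_n p_n + a_{n+1} p_{n+2}`. -/
def jacobiA (β γ : ℝ) (n : ℕ) : ℝ :=
  if Even n then Real.sqrt (β + (n / 2 : ℕ)) else γ * Real.sqrt ((n / 2 : ℕ) + 1)

/-- The squares of the Jacobi coefficients when `γ² = 1`: `b_{2n} = β + n`, `b_{2n+1} = n + 1`. -/
def jacobiB (β : ℝ) (n : ℕ) : ℝ :=
  if Even n then β + (n / 2 : ℕ) else (n / 2 : ℕ) + 1

/-- The monic generalized Hermite polynomials. -/
def monicQ (β : ℝ) : ℕ → ℝ[X]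
  | 0 => 1
  | 1 => X
  | n + 2 => X * monicQ β (n + 1) - C (jacobiB β n) * monicQ β n

lemma jacobiA_even (β γ : ℝ) (n : ℕ) : jacobiA β γ (2 * n) = Real.sqrt (β + n) := by
  simp [jacobiA]

lemma jacobiA_odd (β γ : ℝ) (n : ℕ) : jacobiA β γ (2 * n + 1) = γ * Real.sqrt (n + 1) := by
  have : (2 * n + 1) / 2 = n := by omega
  simp [jacobiA, this]

lemma jacobiB_even (β : ℝ) (n : ℕ) : jacobiB β (2 * n) = β + n := by
  simp [jacobiB]

lemma jacobiB_odd (β : ℝ) (n : ℕ) : jacobiB β (2 * n + 1) = n + 1 := by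
  have : (2 * n + 1) / 2 = n := by omega
  simp [jacobiB, this]

lemma jacobiB_pos {β : ℝ} (hβ : 0 < β) (n : ℕ) : 0 < jacobiB β n := by
  unfold jacobiB
  split_ifs <;> positivity

lemma jacobiA_sq {β γ : ℝ} (hβ : 0 < β) (hγ : γ = 1 ∨ γ = -1) (n : ℕ) :
    jacobiA β γ n * jacobiA β γ n = jacobiB β n := by
  unfold jacobiA jacobiB
  split_ifs
  · exact Real.mul_self_sqrt (by positivity)
  · have h := Real.mul_self_sqrt (show (0 : ℝ) ≤ (n / 2 : ℕ) + 1 by positivity)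
    rcases hγ with rfl | rfl <;> linarith

/-! ### The moment functional -/

lemma integrable_weight_pow {β : ℝ} (hβ : 0 < β) (k : ℕ) :
    Integrable (fun x : ℝ => Real.exp (-x ^ 2) * |x| ^ (2 * β - 1) * x ^ k) := by
  set g : ℝ → ℝ := fun x => x ^ (2 * β - 1 + k) * Real.exp (-1 * x ^ 2) with hg
  have hgi : IntegrableOn g (Ioi 0) :=
    integrableOn_rpow_mul_exp_neg_mul_sq one_pos
      (by have : (0 : ℝ) ≤ k := k.cast_nonneg
          linarith)
  have h1 : Integrable ((Ioi (0 : ℝ)).indicator g) := hgi.integrable_indicator measurableSet_Ioi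
  have h2 := h1.add h1.comp_neg
  refine h2.mono' (by fun_prop) ?_
  have hne : ∀ᵐ x : ℝ, x ≠ 0 := by simp [ae_iff]
  filter_upwards [hne] with x hx
  have habs : ‖Real.exp (-x ^ 2) * |x| ^ (2 * β - 1) * x ^ k‖ = g |x| := by
    have : 0 < |x| := abs_pos.mpr hx
    simp only [hg, norm_mul, norm_pow, Real.norm_eq_abs, Real.abs_exp]
    rw [abs_of_nonneg (by positivity : 0 ≤ |x| ^ (2 * β - 1)), Real.rpow_add this,
      Real.rpow_natCast, sq_abs, neg_one_mul]
    ring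
  rw [habs]
  rcases lt_or_gt_of_ne hx with h | h
  · simp [indicator, h, abs_of_neg h, not_lt.mpr h.le]
  · simp [indicator, h, abs_of_pos h, not_lt.mpr h.le]

lemma integral_weight_even {β : ℝ} (hβ : 0 < β) (k : ℕ) :
    ∫ x : ℝ, Real.exp (-x ^ 2) * |x| ^ (2 * β - 1) * x ^ (2 * k) = Real.Gamma (β + k) := by
  have h := integral_comp_abs
    (f := fun x : ℝ => Real.exp (-x ^ 2) * x ^ (2 * β - 1) * x ^ (2 * k))
  have he : ∀ x : ℝ, |x| ^ (2 * k) = x ^ (2 * k) := fun x => by rw [pow_mul, sq_abs, ← pow_mul]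
  simp only [sq_abs, he] at h
  rw [h]
  have h2 := integral_rpow_mul_exp_neg_rpow (p := 2) (q := 2 * β - 1 + (2 * k : ℕ)) two_pos
    (by have : (0 : ℝ) ≤ (2 * k : ℕ) := Nat.cast_nonneg _
        linarith)
  have h3 : ∫ x in Ioi (0 : ℝ), Real.exp (-x ^ 2) * x ^ (2 * β - 1) * x ^ (2 * k) =
      ∫ x in Ioi (0 : ℝ), x ^ (2 * β - 1 + (2 * k : ℕ)) * Real.exp (-x ^ (2 : ℝ)) := by
    refine setIntegral_congr_fun measurableSet_Ioi fun x hx => ?_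
    have hx : 0 < x := hx
    rw [Real.rpow_add hx, Real.rpow_natCast, Real.rpow_two]
    ring
  rw [h3, h2]
  have : (2 * β - 1 + (2 * k : ℕ) + 1) / 2 = β + k := by push_cast; ring
  rw [this]
  ring

lemma integral_weight_odd (β : ℝ) (k : ℕ) :
    ∫ x : ℝ, Real.exp (-x ^ 2) * |x| ^ (2 * β - 1) * x ^ (2 * k + 1) = 0 := by
  have h := integral_neg_eq_self
    (fun x : ℝ => Real.exp (-x ^ 2) * |x| ^ (2 * β - 1) * x ^ (2 * k + 1)) volume
  have he : ∀ x : ℝ, (-x) ^ (2 * k + 1) = -x ^ (2 * k + 1) := fun x => Odd.neg_pow ⟨k, rfl⟩ x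
  simp only [neg_sq, abs_neg, he, mul_neg, integral_neg] at h
  linarith

lemma integrable_weight_eval {β : ℝ} (hβ : 0 < β) (P : ℝ[X]) :
    Integrable (fun x : ℝ => Real.exp (-x ^ 2) * |x| ^ (2 * β - 1) * P.eval x) := by
  induction P using Polynomial.induction_on' with
  | add P Q hP hQ =>
    simp only [eval_add, mul_add]
    exact hP.add hQ
  | monomial n c =>
    refine ((integrable_weight_pow hβ n).const_mul c).congr (.of_forall fun x => ?_)
    simp only [eval_monomial]
    ring

/-- The functional `P ↦ ∫ e^{-x²} |x|^{2β-1} P(x) dx` on polynomials. -/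
def momentL {β : ℝ} (hβ : 0 < β) : ℝ[X] →ₗ[ℝ] ℝ where
  toFun P := ∫ x : ℝ, Real.exp (-x ^ 2) * |x| ^ (2 * β - 1) * P.eval x
  map_add' P Q := by
    simp only [eval_add, mul_add]
    exact integral_add (integrable_weight_eval hβ P) (integrable_weight_eval hβ Q)
  map_smul' c P := by
    simp only [eval_smul, smul_eq_mul, RingHom.id_apply]
    rw [← integral_const_mul]
    congr 1
    ext x
    ring

/-! ### Orthogonality of the monic polynomials -/

lemma functional_mul_monicQ (L : ℝ[X] →ₗ[ℝ] ℝ) (β : ℝ) (n : ℕ) (P : ℝ[X]) :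
    L (P * monicQ β (n + 2)) =
      L (P * X * monicQ β (n + 1)) - jacobiB β n * L (P * monicQ β n) := by
  have : P * monicQ β (n + 2) =
      P * X * monicQ β (n + 1) - jacobiB β n • (P * monicQ β n) := by
    rw [monicQ, Polynomial.smul_eq_C_mul]
    ring
  rw [this, map_sub, map_smul, smul_eq_mul]

lemma functional_parity (L : ℝ[X] →ₗ[ℝ] ℝ) (β : ℝ) (hodd : ∀ k, L (X ^ (2 * k + 1)) = 0) (n : ℕ) :
    ∀ j, Odd (j + n) → L (X ^ j * monicQ β n) = 0 := by
  induction n using Nat.twoStepInduction with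
  | zero =>
    rintro j ⟨k, hk⟩
    obtain rfl : j = 2 * k + 1 := hk
    simpa [monicQ] using hodd k
  | one =>
    rintro j ⟨k, hk⟩
    rw [monicQ, ← pow_succ, hk, hodd]
  | more n ih0 ih1 =>
    intro j hj
    rw [functional_mul_monicQ, ← pow_succ, ih0 j (by grind), ih1 (j + 1) (by grind)]
    simp

lemma descPochhammer_eval_add_one (n : ℕ) (k : ℝ) :
    (descPochhammer ℝ n).eval (k + 1) * (k + 1 - n) = (k + 1) * (descPochhammer ℝ n).eval k := by
  rw [← descPochhammer_succ_eval, descPochhammer_succ_left]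
  simp [eval_comp]

/-- Moments of the monic polynomials against powers of matching parity. The two families have to be
treated together, since the recurrence links each to the other. -/
lemma functional_closed_form (L : ℝ[X] →ₗ[ℝ] ℝ) {β : ℝ} (hβ : 0 < β)
    (heven : ∀ k : ℕ, L (X ^ (2 * k)) = Real.Gamma (β + k)) (n : ℕ) :
    (∀ k : ℕ, L (X ^ (2 * k) * monicQ β (2 * n)) =
      Real.Gamma (β + k) * (descPochhammer ℝ n).eval (k : ℝ)) ∧
    (∀ k : ℕ, L (X ^ (2 * k + 1) * monicQ β (2 * n + 1)) =
      Real.Gamma (β + k + 1) * (descPochhammer ℝ n).eval (k : ℝ)) := by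
  have hG : ∀ k : ℕ, Real.Gamma (β + k + 1) = (β + k) * Real.Gamma (β + k) := fun k =>
    Real.Gamma_add_one (by positivity)
  induction n with
  | zero =>
    refine ⟨fun k => by simp [monicQ, heven], fun k => ?_⟩
    have := heven (k + 1)
    push_cast at this
    rw [show 2 * 0 + 1 = 1 from rfl, monicQ, ← pow_succ, show 2 * k + 1 + 1 = 2 * (k + 1) by ring,
      this]
    simp [add_assoc]
  | succ n ih =>
    obtain ⟨ih0, ih1⟩ := ih
    have hev : ∀ k : ℕ, L (X ^ (2 * k) * monicQ β (2 * n + 2)) =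
        Real.Gamma (β + k) * (descPochhammer ℝ (n + 1)).eval (k : ℝ) := by
      intro k
      rw [functional_mul_monicQ, ← pow_succ, ih0, ih1, jacobiB_even, hG, descPochhammer_succ_eval]
      ring
    refine ⟨hev, fun k => ?_⟩
    have h1 := hev (k + 1)
    rw [show 2 * (n + 1) + 1 = 2 * n + 1 + 2 by ring, functional_mul_monicQ, ← pow_succ,
      show 2 * k + 1 + 1 = 2 * (k + 1) by ring, h1, ih1, jacobiB_odd,
      descPochhammer_succ_eval, descPochhammer_succ_eval]
    push_cast
    rw [descPochhammer_eval_add_one, ← add_assoc]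
    ring

lemma functional_monicQ (L : ℝ[X] →ₗ[ℝ] ℝ) {β : ℝ} (hβ : 0 < β)
    (heven : ∀ k : ℕ, L (X ^ (2 * k)) = Real.Gamma (β + k))
    (hodd : ∀ k, L (X ^ (2 * k + 1)) = 0) (n : ℕ) :
    L (monicQ β n) = if 0 = n then Real.Gamma β else 0 := by
  rcases Nat.even_or_odd' n with ⟨k, rfl | rfl⟩
  · have := (functional_closed_form L hβ heven k).1 0
    simp only [mul_zero, pow_zero, one_mul, Nat.cast_zero, add_zero,
      descPochhammer_eval_zero] at this
    rw [this]
    rcases Nat.eq_zero_or_pos k with rfl | hk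
    · simp
    · simp [hk.ne']
  · have := functional_parity L β hodd (2 * k + 1) 0 (by simp)
    simpa using this

/-- A functional killing `Q_n` for `n ≥ 1` makes the `Q_n` orthogonal: multiplication by `x` may be
moved from one factor to the other. -/
lemma functional_orthogonality (L : ℝ[X] →ₗ[ℝ] ℝ) {β c : ℝ}
    (hL : ∀ n, L (monicQ β n) = if 0 = n then c else 0) (m : ℕ) :
    ∀ n, L (monicQ β m * monicQ β n) =
      if m = n then c * ∏ i ∈ Finset.range m, jacobiB β i else 0 := by
  have hX : ∀ (P : ℝ[X]) (n : ℕ), L (P * X * monicQ β (n + 1)) =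
      L (P * monicQ β (n + 2)) + jacobiB β n * L (P * monicQ β n) := fun P n => by
    rw [functional_mul_monicQ]; ring
  induction m using Nat.twoStepInduction with
  | zero => intro n; simp [monicQ, hL]
  | one =>
    rintro (_ | n)
    · simpa [monicQ] using hL 1
    · have := hX 1 n
      rw [one_mul, one_mul, one_mul, hL, hL] at this
      rw [show monicQ β 1 = X from rfl, this]
      rcases n with _ | n <;> simp [mul_comm]
  | more m ih0 ih1 =>
    rintro (_ | n)
    · have := hL (m + 2)
      simpa [monicQ] using this
    · have h1 : L (monicQ β (m + 2) * monicQ β (n + 1)) =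
          L (monicQ β (m + 1) * X * monicQ β (n + 1)) -
            jacobiB β m * L (monicQ β m * monicQ β (n + 1)) := by
        rw [mul_comm, functional_mul_monicQ, mul_comm _ (monicQ β m),
          show monicQ β (n + 1) * X * monicQ β (m + 1) =
            monicQ β (m + 1) * X * monicQ β (n + 1) by ring]
      rw [h1, hX, ih0, ih1, ih1]
      rcases lt_trichotomy m (n + 1) with h | h | h
      · rcases eq_or_ne (m + 1) n with rfl | h'
        · simp [Finset.prod_range_succ, show m ≠ m + 1 + 1 by omega]
          ring
        · simp [h.ne, h', show m + 2 ≠ n + 1 by omega]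
      · subst h
        simp [Finset.prod_range_succ, show n + 1 + 1 ≠ n by omega]
        ring
      · simp [h.ne', show m + 1 ≠ n by omega, show m + 2 ≠ n + 1 by omega]

/-! ### Normalisation -/

lemma prod_mul_eq_eval {β γ : ℝ} {p : ℕ → ℝ → ℝ}
    (hp0 : ∀ x : ℝ, p 0 x = 1) (ha : ∀ n, jacobiA β γ n * jacobiA β γ n = jacobiB β n)
    (h0 : ∀ x, x * p 0 x = jacobiA β γ 0 * p 1 x)
    (hrec : ∀ n x, x * p (n + 1) x =
      jacobiA β γ n * p n x + jacobiA β γ (n + 1) * p (n + 2) x) (n : ℕ) (x : ℝ) :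
    (∏ i ∈ Finset.range n, jacobiA β γ i) * p n x = (monicQ β n).eval x := by
  induction n using Nat.twoStepInduction with
  | zero => simp [monicQ, hp0]
  | one => simp [monicQ, ← h0, hp0]
  | more n ih0 ih1 =>
    simp only [monicQ, eval_sub, eval_mul, eval_X, eval_C, ← ih0, ← ih1, ← ha,
      Finset.prod_range_succ]
    linear_combination
      (-(∏ i ∈ Finset.range n, jacobiA β γ i) * jacobiA β γ n) * hrec n x

theorem stmt_7 (β γ : ℝ) (hβ : 0 < β) (hγ : γ = 1 ∨ γ = -1)
    (p : ℕ → ℝ → ℝ)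
    (hp0 : ∀ x : ℝ, p 0 x = 1)
    (hrec1 : ∀ (n : ℕ) (x : ℝ), x * p (2 * n) x =
      γ * Real.sqrt n * p (2 * n - 1) x + Real.sqrt (β + n) * p (2 * n + 1) x)
    (hrec2 : ∀ (n : ℕ) (x : ℝ), x * p (2 * n + 1) x =
      Real.sqrt (β + n) * p (2 * n) x + γ * Real.sqrt (n + 1) * p (2 * n + 2) x)
    (m n : ℕ) :
    MeasureTheory.Integrable
      (fun x : ℝ => Real.exp (-x ^ 2) * |x| ^ (2 * β - 1) * (p n x * p m x)) ∧
    ∫ x : ℝ, Real.exp (-x ^ 2) * |x| ^ (2 * β - 1) * (p n x * p m x)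
      = Real.Gamma β * (if m = n then (1 : ℝ) else 0) := by
  have ha := jacobiA_sq hβ hγ
  have hane : ∀ i, jacobiA β γ i ≠ 0 := fun i h => by
    have := ha i
    rw [h, zero_mul] at this
    exact (jacobiB_pos hβ i).ne this
  -- At `n = 0` the factor `√0` kills the junk term `p (2 * 0 - 1) = p 0` of the first recurrence.
  have h0 : ∀ x, x * p 0 x = jacobiA β γ 0 * p 1 x := fun x => by
    simpa [jacobiA] using hrec1 0 x
  have hrec : ∀ n x, x * p (n + 1) x =
      jacobiA β γ n * p n x + jacobiA β γ (n + 1) * p (n + 2) x := by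
    intro n x
    rcases Nat.even_or_odd' n with ⟨k, rfl | rfl⟩
    · rw [jacobiA_even, jacobiA_odd, hrec2]
    · have := hrec1 (k + 1) x
      rw [show 2 * k + 1 + 1 = 2 * (k + 1) by ring, jacobiA_even, jacobiA_odd, this]
      push_cast
      rfl
  set A : ℕ → ℝ := fun n => ∏ i ∈ Finset.range n, jacobiA β γ i with hA
  have hAne : ∀ n, A n ≠ 0 := fun n => Finset.prod_ne_zero_iff.mpr fun i _ => hane i
  have hp : ∀ n x, p n x = (A n)⁻¹ * (monicQ β n).eval x := fun n x => by
    rw [← prod_mul_eq_eval hp0 ha h0 hrec, inv_mul_cancel_left₀ (hAne n)]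
  have hfun : (fun x : ℝ => Real.exp (-x ^ 2) * |x| ^ (2 * β - 1) * (p n x * p m x)) =
      fun x => ((A n)⁻¹ * (A m)⁻¹) *
        (Real.exp (-x ^ 2) * |x| ^ (2 * β - 1) * (monicQ β m * monicQ β n).eval x) := by
    funext x
    rw [hp, hp, eval_mul]
    ring
  rw [hfun]
  refine ⟨(integrable_weight_eval hβ _).const_mul _, ?_⟩
  have horth := functional_orthogonality (momentL hβ)
    (functional_monicQ (momentL hβ) hβ
      (fun k => by simpa [momentL] using integral_weight_even hβ k)
      (fun k => by simpa [momentL] using integral_weight_odd β k)) m n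
  rw [integral_const_mul]
  change _ * momentL hβ (monicQ β m * monicQ β n) = _
  rw [horth]
  split_ifs with hmn
  · subst hmn
    have : ∏ i ∈ Finset.range m, jacobiB β i = A m * A m := by
      simp only [hA, ← Finset.prod_mul_distrib, ha]
    rw [this]
    have := hAne m
    field_simp
  · simp
end
end

section
/- Fix a real number β > 0 and a real number γ with 0 < γ² < 1, and let p_n be the associated recurrence polynomials. Then for all m, n ∈ ℕ the following discrete orthogonality relation holds: ∑_{k=0}^{∞} (1/2)·((β)_k / k!)·γ^{2k}·( p_m(x_k)·p_n(x_k) + p_m(−x_k)·p_n(−x_k) ) = (1−γ²)^{−β} · δ_{m,n}, where x_k = √(1−γ²)·√(β+k) and δ_{m,n} is the Kronecker delta; in particular the series on the left converges. -/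
/-!
The polynomials `p_{2n}(x_k)` and `p_{2n+1}(x_k) / x_k` are, up to normalisation, the Meixner
polynomials `M_n(k; β, c)` and `M_n(k; β + 1, c)` with `c = γ²`, and the measure is the symmetrised
negative binomial weight `w_k = (β)_k / k! · c^k`.

Orthogonality is derived from the three-term recurrence `x p_n = b_n p_{n-1} + b_{n+1} p_{n+1}`
alone: writing `⟨m, n⟩` for the sum of `p_m p_n`, computing `⟨x p_m, p_n⟩ = ⟨p_m, x p_n⟩` in two ways
expresses `⟨m + 1, n⟩` through `⟨m, ·⟩` and `⟨m - 1, ·⟩`. Hence everything follows by induction on `m`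
(`hasSum_of_recurrence`), as finite linear combinations of convergent series, from the row `m = 0`,
i.e. from `⟨0, 0⟩ = (1 - c)^{-β}` (binomial series, `hasSum_weight`) and `⟨0, n⟩ = 0` for `n ≥ 1`.
For odd `n` the latter is parity. For even `n = 2j + 2` the backward shift relation of the Meixner
polynomials (`meixner_shift`)
`c (β + k) M_j(k; β + 1) - k M_j(k - 1; β + 1) = c β M_{j+1}(k; β)`
together with `(k + 1) w_{k+1} = c (β + k) w_k` makes the series telescope; its terms are summable
because `p_n(x_k)` grows polynomially in `k` while `w_k` decays geometrically.
-/

noncomputable section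

open Filter Topology Asymptotics

/-! ### The negative binomial weight -/

/-- The weight `(β)_k / k! · c^k`. -/
def weight (β c : ℝ) (k : ℕ) : ℝ := poch β k / k.factorial * c ^ k

lemma weight_zero (β c : ℝ) : weight β c 0 = 1 := by simp [weight, poch]

/-- The Pearson equation of the weight. -/
lemma weight_succ (β c : ℝ) (k : ℕ) :
    ((k : ℝ) + 1) * weight β c (k + 1) = c * (β + k) * weight β c k := by
  have h1 : (k.factorial : ℝ) ≠ 0 := by positivity
  have h2 : (k : ℝ) + 1 ≠ 0 := by positivity
  simp only [weight, poch, Nat.factorial_succ]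
  push_cast
  field_simp
  ring

lemma weight_pos {β c : ℝ} (hβ : 0 < β) (hc : 0 < c) (k : ℕ) : 0 < weight β c k := by
  induction k with
  | zero => simp [weight_zero]
  | succ k ih =>
    have h := weight_succ β c k
    have h3 : 0 < c * (β + k) * weight β c k := by positivity
    rw [← h] at h3
    exact pos_of_mul_pos_right h3 (by positivity)

lemma poch_eq_choose (β : ℝ) (k : ℕ) :
    poch β k / k.factorial = Ring.choose (β + k - 1) k := by
  have h1 : (k.factorial : ℝ) ≠ 0 := by positivity
  have h2 := Ring.factorial_nsmul_multichoose_eq_ascPochhammer β k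
  have h3 : ∀ n : ℕ, (ascPochhammer ℝ n).eval β = poch β n := by
    intro n
    induction n with
    | zero => simp [poch]
    | succ n ih => rw [ascPochhammer_succ_eval, ih, poch]
  rw [Polynomial.ascPochhammer_smeval_eq_eval, h3, nsmul_eq_mul] at h2
  rw [Ring.choose, show β + k - 1 - k + 1 = β by ring, ← h2]
  field_simp

/-- The binomial series for `(1 - c)^{-β}`. -/
lemma hasSum_weight {β c : ℝ} (hc : 0 < c) (hc1 : c < 1) :
    HasSum (weight β c) ((1 - c) ^ (-β)) := by
  have h := Real.one_div_one_sub_rpow_hasFPowerSeriesOnBall_zero β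
  have hmem : c ∈ Metric.eball (0 : ℝ) 1 := by
    simp [Metric.mem_eball, edist_dist, abs_of_pos hc, hc1]
  have h2 := h.hasSum hmem
  simp only [FormalMultilinearSeries.ofScalars_apply_eq, zero_add, smul_eq_mul] at h2
  rw [Real.rpow_neg (by linarith), ← one_div]
  have e : weight β c = fun k : ℕ => Ring.choose (β + k - 1) k * c ^ k := by
    funext k
    rw [weight, poch_eq_choose]
  rw [e]
  exact h2

/-- The weight decays geometrically, so polynomially growing factors are harmless. -/
lemma summable_weight_mul_pow {β c : ℝ} (hβ : 0 < β) (hc : 0 < c) (hc1 : c < 1) (j : ℕ) :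
    Summable fun k : ℕ => weight β c k * ((k : ℝ) + 1) ^ j := by
  refine summable_of_ratio_test_tendsto_lt_one hc1 (Eventually.of_forall fun k => ?_) ?_
  · have := weight_pos hβ hc k
    positivity
  · have hinv : Tendsto (fun k : ℕ => 1 / ((k : ℝ) + 1)) atTop (𝓝 0) :=
      tendsto_one_div_add_atTop_nhds_zero_nat
    have hlim : Tendsto (fun k : ℕ => c * (1 + (β - 1) * (1 / ((k : ℝ) + 1))) *
        (1 + 1 / ((k : ℝ) + 1)) ^ j) atTop (𝓝 (c * (1 + (β - 1) * 0) * (1 + 0) ^ j)) :=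
      (((hinv.const_mul _).const_add _).const_mul _).mul ((hinv.const_add _).pow j)
    simp only [mul_zero, add_zero, one_pow, mul_one] at hlim
    refine hlim.congr fun k => ?_
    have hw := weight_pos hβ hc k
    have hw' := weight_pos hβ hc (k + 1)
    have hk : (0 : ℝ) < (k : ℝ) + 1 := by positivity
    have hs : weight β c (k + 1) = c * (β + k) * weight β c k / ((k : ℝ) + 1) := by
      rw [eq_div_iff hk.ne', ← weight_succ]; ring
    rw [Real.norm_of_nonneg (by positivity), Real.norm_of_nonneg (by positivity), hs]
    have e1 : 1 + 1 / ((k : ℝ) + 1) = ((k : ℝ) + 1 + 1) / (k + 1) := by field_simp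
    rw [e1, div_pow]
    push_cast
    field_simp
    ring

/-! ### Shift relations of Meixner polynomials -/

/-- Shift relations for a pair of families satisfying the two contiguous relations between the
Meixner polynomials `M n k = M_n(k; β, c)` and `N n k = M_n(k; β + 1, c)`: the forward shift, and
the backward shift in the form `(β + k) N_n(k) - k N_n(k - 1) = β M_n(k)` (with `k = 0` split off),
proved by simultaneous induction. -/
lemma meixner_shift {β c : ℝ} (hβ : 0 < β) (hc : 0 < c) (M N : ℕ → ℕ → ℝ)
    (hM0 : ∀ k, M 0 k = 1) (hN0 : ∀ k, N 0 k = 1)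
    (h1 : ∀ n k, β * M (n + 1) k = (β + n + 1) * N (n + 1) k - (n + 1) * N n k)
    (h2 : ∀ n k, (1 - c) * (β + k) * N n k = β * (M n k - c * M (n + 1) k)) (n : ℕ) :
    (∀ k, c * β * (M (n + 1) (k + 1) - M (n + 1) k) = (c - 1) * (n + 1) * N n k) ∧
    (N n 0 = M n 0) ∧
    (∀ k : ℕ, (β + k + 1) * N n (k + 1) = (k + 1) * N n k + β * M n (k + 1)) := by
  induction n with
  | zero =>
    refine ⟨fun k => ?_, by rw [hM0, hN0], fun k => by rw [hM0, hN0, hN0]; ring⟩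
    have a := h2 0 k
    have b := h2 0 (k + 1)
    rw [hM0, hN0] at a b
    rw [hN0]
    push_cast at *
    linear_combination b - a
  | succ n ih =>
    obtain ⟨hF, hZ, hD⟩ := ih
    have hn : β + n + 1 ≠ 0 := by positivity
    have hZ' : N (n + 1) 0 = M (n + 1) 0 := by
      have a := h2 n 0
      have b := h1 n 0
      have e : N n 0 = M (n + 1) 0 := by
        have : c * β ≠ 0 := by positivity
        apply mul_left_cancel₀ this
        push_cast at a
        linear_combination -a + β * hZ
      apply mul_left_cancel₀ hn
      linear_combination -b + (n + 1 : ℝ) * e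
    have hD' : ∀ k : ℕ, (β + k + 1) * N (n + 1) (k + 1)
        = (k + 1) * N (n + 1) k + β * M (n + 1) (k + 1) := by
      intro k
      have hcn : c * (β + n + 1) ≠ 0 := by positivity
      apply mul_left_cancel₀ hcn
      have a := hF k
      have b := hD k
      have d := h2 n (k + 1)
      push_cast at d
      have e1 := h1 n (k + 1)
      have e0 := h1 n k
      -- After multiplication by `c (β + n + 1)`, both values of `N (n + 1)` can be eliminated by `h1`;
      -- the rest is a combination of the two shift relations for `n` and of `h2`.
      linear_combination (-c * (β + k + 1)) * e1 + c * (k + 1) * e0 + (k + 1) * a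
        + (n + 1) * b - (n + 1) * d
    refine ⟨fun k => ?_, hZ', hD'⟩
    have a := h2 (n + 1) k
    have b := h2 (n + 1) (k + 1)
    have d := hD' k
    have e := hF k
    have f := h1 n k
    push_cast at *
    linear_combination b - a - (1 - c) * d + e - (1 - c) * f

/-! ### Three-term recurrences -/

/-- The induction behind orthogonality. `G m n` stands for the terms of the series for `⟨p_m, p_n⟩`;
`hG` says that `x p_m p_n` can be expanded through either factor. The indices `m - 1` and `n - 1`
are truncated, which is harmless because `b 0 = 0`. -/
lemma hasSum_of_recurrence (G : ℕ → ℕ → ℕ → ℝ) (b : ℕ → ℝ) (C : ℝ) (hb0 : b 0 = 0)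
    (hb : ∀ n, b (n + 1) ≠ 0)
    (hG : ∀ m n k, b (m + 1) * G (m + 1) n k + b m * G (m - 1) n k
      = b (n + 1) * G m (n + 1) k + b n * G m (n - 1) k)
    (h0 : ∀ n, HasSum (G 0 n) (C * if 0 = n then 1 else 0)) (m : ℕ) :
    ∀ n, HasSum (G m n) (C * if m = n then 1 else 0) := by
  induction m using Nat.strong_induction_on with
  | _ m ih =>
    rcases m with _ | m
    · exact h0
    intro n
    have hA := ih m (by omega) (n + 1)
    have hB := ih m (by omega) (n - 1)
    have hD := ih (m - 1) (by omega) n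
    have hs := (((hA.mul_left (b (n + 1))).add (hB.mul_left (b n))).sub
      (hD.mul_left (b m))).mul_left (b (m + 1))⁻¹
    have hfun : G (m + 1) n = fun k => (b (m + 1))⁻¹ *
        (b (n + 1) * G m (n + 1) k + b n * G m (n - 1) k - b m * G (m - 1) n k) := by
      funext k
      rw [← hG m n k, add_sub_cancel_right, inv_mul_cancel_left₀ (hb m)]
    have hval : (C * if m + 1 = n then 1 else 0) = (b (m + 1))⁻¹ *
        (b (n + 1) * (C * if m = n + 1 then 1 else 0) + b n * (C * if m = n - 1 then 1 else 0) -
          b m * (C * if m - 1 = n then 1 else 0)) := by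
      rw [eq_inv_mul_iff_mul_eq₀ (hb m)]
      rcases n with _ | n
      · rcases m with _ | _ | m <;> simp [hb0]
      · rcases m with _ | m
        · rcases n with _ | n <;> simp [hb0]
        · simp only [Nat.add_sub_cancel, add_left_inj]
          by_cases h1 : m = n + 1
          · subst h1; simp [show ¬ n + 1 + 1 = n by omega]
          · by_cases h2 : m + 1 = n
            · subst h2; simp [show ¬ m = m + 1 + 1 by omega]
            · simp [h1, h2]
    rw [hfun, hval]
    exact hs

/-- The coefficients of the symmetric three-term recurrence
`x p_n = b_n p_{n-1} + b_{n+1} p_{n+1}`: `b_{2n} = S_n` and `b_{2n+1} = R_n`. -/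
def recCoeff (β γ : ℝ) (n : ℕ) : ℝ :=
  if Even n then γ * Real.sqrt (n / 2 : ℕ) else Real.sqrt (β + (n / 2 : ℕ))

lemma recCoeff_even (β γ : ℝ) (n : ℕ) : recCoeff β γ (2 * n) = γ * Real.sqrt n := by
  simp [recCoeff]

lemma recCoeff_odd (β γ : ℝ) (n : ℕ) : recCoeff β γ (2 * n + 1) = Real.sqrt (β + n) := by
  have h : ¬ Even (2 * n + 1) := by simp
  rw [recCoeff, if_neg h, show (2 * n + 1) / 2 = n by omega]

lemma recCoeff_succ_ne_zero {β γ : ℝ} (hβ : 0 < β) (hγ : γ ≠ 0) (n : ℕ) :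
    recCoeff β γ (n + 1) ≠ 0 := by
  obtain ⟨j, rfl | rfl⟩ := Nat.even_or_odd' n
  · rw [recCoeff_odd]; positivity
  · rw [show 2 * j + 1 + 1 = 2 * (j + 1) by ring, recCoeff_even]
    have : (0 : ℝ) < ((j + 1 : ℕ) : ℝ) := by positivity
    have := Real.sqrt_pos.2 this
    positivity

section Recurrence

variable {p : ℕ → ℝ → ℝ} {b : ℕ → ℝ}

lemma parity (hp0 : ∀ x, p 0 x = 1) (hb0 : b 0 = 0) (hb : ∀ n, b (n + 1) ≠ 0)
    (hrec : ∀ n x, x * p n x = b n * p (n - 1) x + b (n + 1) * p (n + 1) x) (n : ℕ) (x : ℝ) :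
    p n (-x) = (-1) ^ n * p n x := by
  induction n using Nat.strong_induction_on with
  | _ n ih =>
    rcases n with _ | _ | n
    · simp [hp0]
    · apply mul_left_cancel₀ (hb 0)
      have h1 := hrec 0 x
      have h2 := hrec 0 (-x)
      simp only [hp0, hb0] at h1 h2
      linear_combination -h1 - h2
    · apply mul_left_cancel₀ (hb (n + 1))
      have h1 := hrec (n + 1) x
      have h2 := hrec (n + 1) (-x)
      rw [Nat.add_sub_cancel, ih (n + 1) (by omega), ih n (by omega)] at h2
      rw [Nat.add_sub_cancel] at h1
      linear_combination -h2 + (-1) ^ n * h1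

/-- A recurrence sequence evaluated at points of at most linear growth grows polynomially. -/
lemma growth (hp0 : ∀ x, p 0 x = 1) (hb : ∀ n, b (n + 1) ≠ 0)
    (hrec : ∀ n x, x * p n x = b n * p (n - 1) x + b (n + 1) * p (n + 1) x) (x : ℕ → ℝ)
    (hx : x =O[atTop] fun k : ℕ => (k : ℝ) + 1) (n : ℕ) :
    (fun k => p n (x k)) =O[atTop] fun k : ℕ => ((k : ℝ) + 1) ^ n := by
  have hmono : ∀ i j, i ≤ j →
      (fun k : ℕ => ((k : ℝ) + 1) ^ i) =O[atTop] fun k : ℕ => ((k : ℝ) + 1) ^ j := by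
    intro i j hij
    refine IsBigO.of_bound 1 (Eventually.of_forall fun k => ?_)
    rw [Real.norm_of_nonneg (by positivity), Real.norm_of_nonneg (by positivity), one_mul]
    exact pow_le_pow_right₀ (by linarith [Nat.cast_nonneg (α := ℝ) k]) hij
  induction n using Nat.strong_induction_on with
  | _ n ih =>
    rcases n with _ | n
    · simp only [hp0, pow_zero]
      exact isBigO_refl _ _
    · have h1 : (fun k => x k * p n (x k)) =O[atTop] fun k : ℕ => ((k : ℝ) + 1) ^ (n + 1) := by
        refine (hx.mul (ih n (by omega))).congr_right fun k => ?_
        ring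
      have h2 := (ih (n - 1) (by omega)).trans (hmono (n - 1) (n + 1) (by omega))
      refine ((h1.sub (h2.const_mul_left (b n))).const_mul_left (b (n + 1))⁻¹).congr_left fun k => ?_
      rw [hrec n (x k)]
      field_simp [hb n]
      ring

end Recurrence

/-! ### Orthogonality -/

/-- The telescoping step: `⟨p_0, p_n⟩ = 0` for even `n > 0`, in terms of `M` and `N` as in
`meixner_shift`. -/
lemma hasSum_weight_mul_meixner {β c : ℝ} (hβ : 0 < β) (hc : 0 < c) (M N : ℕ → ℕ → ℝ)
    (hM0 : ∀ k, M 0 k = 1) (hN0 : ∀ k, N 0 k = 1)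
    (h1 : ∀ n k, β * M (n + 1) k = (β + n + 1) * N (n + 1) k - (n + 1) * N n k)
    (h2 : ∀ n k, (1 - c) * (β + k) * N n k = β * (M n k - c * M (n + 1) k)) (n : ℕ)
    (hsum : Summable fun k : ℕ => weight β c k * ((β + k) * N n k)) :
    HasSum (fun k => weight β c k * M (n + 1) k) 0 := by
  obtain ⟨-, hZ, hD⟩ := meixner_shift hβ hc M N hM0 hN0 h1 h2 n
  -- `T k = k w_k N_n(k - 1)`; the truncated index at `k = 0` has coefficient `0`.
  set T : ℕ → ℝ := fun k => k * weight β c k * N n (k - 1) with hT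
  have hT1 : ∀ k, T (k + 1) = c * (weight β c k * ((β + k) * N n k)) := by
    intro k
    simp only [hT, Nat.add_sub_cancel]
    push_cast
    rw [weight_succ]
    ring
  have hs1 : Summable fun k => T (k + 1) := by
    simp only [hT1]
    exact hsum.mul_left c
  have hsT : Summable T := (summable_nat_add_iff 1).1 hs1
  have hT0 : T 0 = 0 := by simp [hT]
  have htel : HasSum (fun k => T (k + 1) - T k) 0 := by
    have := hs1.hasSum.sub hsT.hasSum
    rwa [hsT.tsum_eq_zero_add, hT0, zero_add, sub_self] at this
  have hfin := htel.mul_left (c * β)⁻¹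
  rw [mul_zero] at hfin
  have hfun : (fun k => weight β c k * M (n + 1) k) = fun k => (c * β)⁻¹ * (T (k + 1) - T k) := by
    funext k
    rw [eq_inv_mul_iff_mul_eq₀ (by positivity), hT1]
    rcases k with _ | k
    · rw [hT0]
      have a := h2 n 0
      push_cast at *
      linear_combination weight β c 0 * a - β * weight β c 0 * hZ
    · have a := h2 n (k + 1)
      have d := hD k
      simp only [hT, Nat.add_sub_cancel]
      push_cast at *
      linear_combination weight β c (k + 1) * a - weight β c (k + 1) * d
  rw [hfun]
  exact hfin

/-- The normalisation `(-γ)^n √((β)_n / n!)`, i.e. the ratio between `p_{2n}(x_k)` and the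
Meixner polynomial `M_n(k; β, γ²)`. -/
def norming (β γ : ℝ) : ℕ → ℝ
  | 0 => 1
  | n + 1 => -(γ * Real.sqrt (β + n) / Real.sqrt (n + 1)) * norming β γ n

lemma norming_ne_zero {β γ : ℝ} (hβ : 0 < β) (hγ : γ ≠ 0) (n : ℕ) : norming β γ n ≠ 0 := by
  induction n with
  | zero => simp [norming]
  | succ n ih =>
    have h1 : Real.sqrt (β + n) ≠ 0 := by positivity
    have h2 : Real.sqrt ((n : ℝ) + 1) ≠ 0 := by positivity
    simp only [norming]
    exact mul_ne_zero (neg_ne_zero.2 (div_ne_zero (mul_ne_zero hγ h1) h2)) ih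

theorem stmt_8 (β γ : ℝ) (hβ : 0 < β) (hγ0 : 0 < γ ^ 2) (hγ1 : γ ^ 2 < 1)
    (p : ℕ → ℝ → ℝ)
    (hp0 : ∀ x : ℝ, p 0 x = 1)
    (hrec1 : ∀ (n : ℕ) (x : ℝ), x * p (2 * n) x =
      γ * Real.sqrt n * p (2 * n - 1) x + Real.sqrt (β + n) * p (2 * n + 1) x)
    (hrec2 : ∀ (n : ℕ) (x : ℝ), x * p (2 * n + 1) x =
      Real.sqrt (β + n) * p (2 * n) x + γ * Real.sqrt (n + 1) * p (2 * n + 2) x)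
    (m n : ℕ) :
    HasSum (fun k : ℕ =>
        (1 / 2) * (poch β k / k.factorial) * γ ^ (2 * k) *
        (p m (Real.sqrt (1 - γ ^ 2) * Real.sqrt (β + k)) *
            p n (Real.sqrt (1 - γ ^ 2) * Real.sqrt (β + k)) +
         p m (-(Real.sqrt (1 - γ ^ 2) * Real.sqrt (β + k))) *
            p n (-(Real.sqrt (1 - γ ^ 2) * Real.sqrt (β + k)))))
      ((1 - γ ^ 2) ^ (-β) * (if m = n then (1 : ℝ) else 0)) := by
  have hγ : γ ≠ 0 := by
    rintro rfl
    simp at hγ0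
  set x : ℕ → ℝ := fun k => Real.sqrt (1 - γ ^ 2) * Real.sqrt (β + k) with hx
  have hxpos : ∀ k, 0 < x k := fun k =>
    mul_pos (Real.sqrt_pos.2 (by linarith)) (Real.sqrt_pos.2 (by positivity))
  have hxsq : ∀ k, x k ^ 2 = (1 - γ ^ 2) * (β + k) := by
    intro k
    rw [hx, mul_pow, Real.sq_sqrt (by linarith), Real.sq_sqrt (by positivity)]
  have hxO : x =O[atTop] fun k : ℕ => (k : ℝ) + 1 := by
    refine IsBigO.of_bound (β + 1) (Eventually.of_forall fun k => ?_)
    rw [Real.norm_of_nonneg (hxpos k).le, Real.norm_of_nonneg (by positivity)]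
    have hk : (0 : ℝ) ≤ k := by positivity
    refine abs_le_of_sq_le_sq' ?_ (by positivity) |>.2
    rw [hxsq]
    have h1 : (1 - γ ^ 2) * (β + k) ≤ 1 * (β + k) := by gcongr; linarith
    have h2 : β + k ≤ (β + 1) * (k + 1) := by nlinarith
    have h3 : 1 ≤ (β + 1) * ((k : ℝ) + 1) := by nlinarith
    nlinarith
  have hb := recCoeff_succ_ne_zero (γ := γ) hβ hγ
  have hb0 : recCoeff β γ 0 = 0 := by simp [recCoeff]
  have hrec : ∀ n y, y * p n y
      = recCoeff β γ n * p (n - 1) y + recCoeff β γ (n + 1) * p (n + 1) y := by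
    intro n y
    obtain ⟨j, rfl | rfl⟩ := Nat.even_or_odd' n
    · rw [recCoeff_even, recCoeff_odd, hrec1]
    · have h := recCoeff_even β γ (j + 1)
      rw [show 2 * (j + 1) = 2 * j + 1 + 1 by ring] at h
      rw [recCoeff_odd, h, hrec2, Nat.add_sub_cancel]
      push_cast
      rfl
  have hpar := parity hp0 hb0 hb hrec
  set G : ℕ → ℕ → ℕ → ℝ := fun m n k =>
    (1 / 2) * weight β (γ ^ 2) k * (p m (x k) * p n (x k) + p m (-x k) * p n (-x k)) with hGdef
  suffices hmain : HasSum (G m n) ((1 - γ ^ 2) ^ (-β) * (if m = n then (1 : ℝ) else 0)) by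
    have e : G m n = fun k : ℕ => (1 / 2) * (poch β k / k.factorial) * γ ^ (2 * k) *
        (p m (x k) * p n (x k) + p m (-x k) * p n (-x k)) := by
      funext k
      simp only [hGdef, weight, pow_mul]
      ring
    rw [e] at hmain
    exact hmain
  refine hasSum_of_recurrence G (recCoeff β γ) _ hb0 hb ?_ ?_ m n
  · intro m n k
    have a1 := hrec m (x k)
    have a2 := hrec n (x k)
    have a3 := hrec m (-x k)
    have a4 := hrec n (-x k)
    simp only [hGdef]
    linear_combination (1 / 2 * weight β (γ ^ 2) k) *
      (p m (x k) * a2 - p n (x k) * a1 + p m (-x k) * a4 - p n (-x k) * a3)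
  intro n
  obtain ⟨j, rfl | rfl⟩ := Nat.even_or_odd' n
  · have e : G 0 (2 * j) = fun k => weight β (γ ^ 2) k * p (2 * j) (x k) := by
      funext k
      simp only [hGdef, hp0, hpar, pow_mul]
      norm_num
      ring
    rw [e]
    rcases j with _ | j
    · simpa [hp0] using hasSum_weight (β := β) hγ0 hγ1
    rw [if_neg (by omega), mul_zero]
    set s := norming β γ with hs
    have hs0 : ∀ n, s n ≠ 0 := norming_ne_zero hβ hγ
    have hR : ∀ n : ℕ, Real.sqrt (β + n) ≠ 0 := fun n => by positivity
    have hR2 : ∀ n : ℕ, Real.sqrt (β + n) ^ 2 = β + n := fun n => Real.sq_sqrt (by positivity)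
    have hS2 : ∀ n : ℕ, Real.sqrt ((n : ℝ) + 1) ^ 2 = n + 1 := fun n => Real.sq_sqrt (by positivity)
    have hssucc : ∀ n : ℕ, Real.sqrt ((n : ℝ) + 1) * s (n + 1) = -γ * Real.sqrt (β + n) * s n := by
      intro n
      have : Real.sqrt ((n : ℝ) + 1) ≠ 0 := by positivity
      simp only [hs, norming]
      field_simp
    -- The Meixner polynomials `M_n(k; β, γ²)` and `M_n(k; β + 1, γ²)`, recovered from `p`.
    set M : ℕ → ℕ → ℝ := fun n k => p (2 * n) (x k) / s n with hM
    set N : ℕ → ℕ → ℝ := fun n k =>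
      β * p (2 * n + 1) (x k) / (x k * s n * Real.sqrt (β + n)) with hN
    have hpM : ∀ n k, p (2 * n) (x k) = s n * M n k := by
      intro n k
      have := hs0 n
      simp only [hM]
      field_simp
    have hpN : ∀ n k, β * p (2 * n + 1) (x k) = x k * s n * Real.sqrt (β + n) * N n k := by
      intro n k
      have := hs0 n
      have := (hxpos k).ne'
      have := hR n
      simp only [hN]
      field_simp
    have hM0 : ∀ k, M 0 k = 1 := fun k => by simp [hM, hs, norming, hp0]
    have hN0 : ∀ k, N 0 k = 1 := by
      intro k
      have h1 := hrec1 0 (x k)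
      have h2 := hpN 0 k
      have h3 := hR2 0
      simp only [hp0, mul_zero, zero_add, Nat.cast_zero, Real.sqrt_zero, zero_mul, mul_one,
        add_zero, hs, norming] at h1 h2 h3
      apply mul_left_cancel₀ (mul_pos (hxpos k) hβ).ne'
      rw [mul_one]
      linear_combination (-β) * h1 - Real.sqrt β * h2 - x k * N 0 k * h3
    clear_value M N
    have h1 : ∀ n k, β * M (n + 1) k = (β + n + 1) * N (n + 1) k - (n + 1) * N n k := by
      intro n k
      have r := hrec1 (n + 1) (x k)
      have e0 := hpN n k
      have e1 := hpN (n + 1) k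
      have e2 := hpM (n + 1) k
      have q := hR2 (n + 1)
      have t := hS2 n
      have u := hssucc n
      rw [show 2 * (n + 1) - 1 = 2 * n + 1 by omega, e2] at r
      push_cast at *
      apply mul_left_cancel₀ (mul_ne_zero (hxpos k).ne' (hs0 (n + 1)))
      linear_combination β * r + γ * Real.sqrt (n + 1) * e0 + Real.sqrt (β + (n + 1)) * e1
        + x k * s (n + 1) * N (n + 1) k * q - x k * s (n + 1) * N n k * t
        + x k * Real.sqrt (n + 1) * N n k * u
    have h2 : ∀ n k, (1 - γ ^ 2) * (β + k) * N n k = β * (M n k - γ ^ 2 * M (n + 1) k) := by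
      intro n k
      have r := hrec2 n (x k)
      have e0 := hpN n k
      have u := hssucc n
      rw [show 2 * n + 2 = 2 * (n + 1) by ring, hpM n k, hpM (n + 1) k] at r
      rw [← hxsq]
      apply mul_left_cancel₀ (mul_ne_zero (hs0 n) (hR n))
      linear_combination β * r - x k * e0 + β * γ * M (n + 1) k * u
    have hsum : Summable fun k : ℕ => weight β (γ ^ 2) k * ((β + k) * N j k) := by
      have hg := growth hp0 hb hrec x hxO (2 * j + 1)
      refine summable_of_isBigO_nat (summable_weight_mul_pow hβ hγ0 hγ1 (2 * j + 2)) ?_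
      refine (isBigO_refl _ _).mul ?_
      have h3 := (hxO.mul hg).const_mul_left
        (β / ((1 - γ ^ 2) * (s j * Real.sqrt (β + j))))
      refine (h3.congr_left fun k => ?_).congr_right fun k => by ring
      have i1 := hpN j k
      have i2 := hxsq k
      have i3 := hs0 j
      have i4 := hR j
      have i5 : 1 - γ ^ 2 ≠ 0 := by linarith
      rw [div_mul_eq_mul_div, div_eq_iff (by positivity)]
      linear_combination x k * i1 + s j * Real.sqrt (β + j) * N j k * i2
    have hfin := (hasSum_weight_mul_meixner hβ hγ0 M N hM0 hN0 h1 h2 j hsum).mul_left (s (j + 1))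
    rw [mul_zero] at hfin
    refine (congrArg (fun f => HasSum f (0 : ℝ)) (funext fun k => ?_)).mp hfin
    rw [hpM]
    ring
  · have e : G 0 (2 * j + 1) = fun _ => 0 := by
      funext k
      simp only [hGdef, hp0, hpar, pow_succ, pow_mul]
      norm_num
    rw [e, if_neg (by omega), mul_zero]
    exact hasSum_zero
end
end

section
/- Let b > 0 and 0 < c < 1 be real numbers, let ξ, ξ' ∈ ℕ, and let z be a real number with |z| < 1 and z ≠ c. Then the series ∑_{n=0}^{∞} ((b)_n / n!) zⁿ M_n(ξ; b, c) M_n(ξ'; b, c) converges and equals (1−z)^{−b−ξ−ξ'} · (1 − z/c)^{ξ+ξ'} · ₂F₁(−ξ, −ξ'; b; z(1−c)²/(z−c)²), where ₂F₁(−ξ, −ξ'; b; w) = ∑_{j=0}^{min(ξ,ξ')} (−ξ)_j (−ξ')_j w^j / ((b)_j j!) is the terminating hypergeometric sum. -/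
/-!
Both the Meixner polynomials and the terminating `₂F₁` are values of one symmetric sum
`phi k l b x = ∑ j, C(k,j) C(l,j) j! x ^ j / (b)_j`. It satisfies two contiguous relations,
`phi_succ_left` (a unit step in one index) and `phi_shift` (a shift `b → b + 1`), which are
identities between the coefficients of `x ^ j`.

Write `u = 1 - 1 / c` and let `S(k, l, b)` be the series with `ξ = k`, `ξ' = l`. The contiguous
relations at `x = u` give, after cancelling the `n = 0` terms and shifting `n` by one,
`S(k+1, l, b) - S(k, l, b) = (u z / b) ((b + l) S(k, l, b+1) - l (1 - u) S(k, l-1, b+1))`.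
The same relations at `x = w = z (1 - c)² / (z - c)²` show that the closed form obeys this
recursion as well: with `q = 1 - z / c = 1 - z + u z` everything reduces to
`w q² = z u²`. As `b > 0` is arbitrary, induction on `k` reduces the claim to `k = 0`; by the
symmetry in `k` and `l` and the case `l = 0` of the recursion, it reduces further to
`S(0, 0, b) = (1 - z) ^ (-b)`, the binomial series. Convergence is carried along the induction.
-/


noncomputable section

open Finset

/-- Meixner polynomial `M_n(k; b, c)`. -/
def meixner (n : ℕ) (k b c : ℝ) : ℝ :=
  ∑ j ∈ range (n + 1),
    poch (-(n : ℝ)) j * poch (-k) j * (1 - 1 / c) ^ j / (poch b j * j.factorial)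

/-- Terminating Gauss hypergeometric sum `₂F₁(-k, -l; b; w)`. -/
def F21nn (k l : ℕ) (b w : ℝ) : ℝ :=
  ∑ j ∈ range (min k l + 1),
    poch (-(k : ℝ)) j * poch (-(l : ℝ)) j * w ^ j / (poch b j * j.factorial)

/-- The symmetric sum `∑ j, C(k,j) C(l,j) j! x ^ j / (b)_j`. It is the common form of the Meixner
polynomial `M_k(l; b, c)` (with `x = 1 - 1 / c`) and of `₂F₁(-k, -l; b; x)`. -/
def phi (k l : ℕ) (b x : ℝ) : ℝ :=
  ∑ j ∈ range (k + 1), (k.choose j : ℝ) * l.choose j * j.factorial * x ^ j / poch b j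

lemma poch_pos_s10 {b : ℝ} (hb : 0 < b) (n : ℕ) : 0 < poch b n := by
  induction n with
  | zero => simp [poch]
  | succ n ih => rw [poch]; positivity

lemma poch_succ_left (b : ℝ) (n : ℕ) : poch b (n + 1) = b * poch (b + 1) n := by
  induction n with
  | zero => simp [poch]
  | succ n ih => rw [poch, ih, poch]; push_cast; ring

lemma poch_neg_natCast (n j : ℕ) :
    poch (-(n : ℝ)) j = (-1) ^ j * (n.choose j * j.factorial) := by
  induction j with
  | zero => simp [poch]
  | succ j ih =>
    have h : (n.choose (j + 1) : ℝ) * (j + 1) = n.choose j * (n - j) := by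
      rcases le_or_gt j n with hj | hj
      · have := Nat.choose_succ_right_eq n j
        rw [← Nat.cast_sub hj]
        exact_mod_cast this
      · simp [Nat.choose_eq_zero_of_lt hj, Nat.choose_eq_zero_of_lt (Nat.lt_succ_of_lt hj)]
    rw [poch, ih, Nat.factorial_succ, pow_succ]
    push_cast
    linear_combination (-1 : ℝ) ^ j * j.factorial * h

/-- Since the terms vanish beyond `min k l`, any longer range of summation gives the same value. -/
lemma phi_eq_sum {k l N : ℕ} (b x : ℝ) (h : min k l < N) :
    phi k l b x =
      ∑ j ∈ range N, (k.choose j : ℝ) * l.choose j * j.factorial * x ^ j / poch b j := by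
  have key : ∀ A B : ℕ, min k l < A → A ≤ B →
      ∑ j ∈ range A, (k.choose j : ℝ) * l.choose j * j.factorial * x ^ j / poch b j =
      ∑ j ∈ range B, (k.choose j : ℝ) * l.choose j * j.factorial * x ^ j / poch b j := by
    intro A B hA hAB
    refine sum_subset (range_subset_range.2 hAB) fun j _ hj => ?_
    have hj' : A ≤ j := by simpa using hj
    rcases min_lt_iff.1 (hA.trans_le hj') with h | h <;> simp [Nat.choose_eq_zero_of_lt h]
  rw [phi]
  rcases le_total (k + 1) N with h' | h'
  · exact key _ _ (by omega) h'
  · exact (key _ _ h h').symm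

lemma phi_comm (k l : ℕ) (b x : ℝ) : phi k l b x = phi l k b x := by
  rw [phi_eq_sum (N := k + l + 1) b x (by omega), phi_eq_sum (N := k + l + 1) b x (by omega)]
  exact sum_congr rfl fun j _ => by ring

lemma meixner_eq_phi (n k : ℕ) (b c : ℝ) : meixner n k b c = phi n k b (1 - 1 / c) := by
  refine sum_congr rfl fun j _ => ?_
  rw [poch_neg_natCast, poch_neg_natCast]
  have h : (j.factorial : ℝ) ≠ 0 := by positivity
  have h2 : ((-1 : ℝ) ^ j) * (-1) ^ j = 1 := by rw [← mul_pow]; simp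
  rw [← div_div, div_eq_iff h, div_mul_eq_mul_div]
  congr 1
  linear_combination (n.choose j * j.factorial * (k.choose j * j.factorial) *
    (1 - 1 / c) ^ j : ℝ) * h2

lemma F21nn_eq_phi (k l : ℕ) (b w : ℝ) : F21nn k l b w = phi k l b w := by
  rw [phi_eq_sum (N := min k l + 1) b w (by omega)]
  refine sum_congr rfl fun j _ => ?_
  rw [poch_neg_natCast, poch_neg_natCast]
  have h : (j.factorial : ℝ) ≠ 0 := by positivity
  have h2 : ((-1 : ℝ) ^ j) * (-1) ^ j = 1 := by rw [← mul_pow]; simp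
  rw [← div_div, div_eq_iff h, div_mul_eq_mul_div]
  congr 1
  linear_combination (k.choose j * j.factorial * (l.choose j * j.factorial) * w ^ j : ℝ) * h2

@[simp] lemma phi_zero_left (l : ℕ) (b x : ℝ) : phi 0 l b x = 1 := by simp [phi, poch]

@[simp] lemma phi_zero_right (k : ℕ) (b x : ℝ) : phi k 0 b x = 1 := by simp [phi_comm k]

lemma phi_succ_left {b : ℝ} (hb : 0 < b) (k l : ℕ) (x : ℝ) :
    phi (k + 1) (l + 1) b x =
      phi k (l + 1) b x + (l + 1) * x / b * phi k l (b + 1) x := by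
  rw [phi_eq_sum (N := k + 1 + 1) b x (by omega),
    phi_eq_sum (k := k) (N := k + 1 + 1) b x (by omega), phi, mul_sum, sum_range_succ', sum_range_succ' _ (k + 1), add_right_comm, ← sum_add_distrib]
  congr 1
  · refine sum_congr rfl fun j _ => ?_
    have h := (poch_pos_s10 (show 0 < b + 1 by linarith) j).ne'
    have h1 : ((l : ℝ) + 1) * l.choose j = (l + 1).choose (j + 1) * (j + 1) := by
      exact_mod_cast Nat.add_one_mul_choose_eq l j
    rw [poch_succ_left, Nat.choose_succ_succ k j, Nat.factorial_succ, pow_succ]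
    push_cast
    field_simp
    linear_combination (-1 : ℝ) * k.choose j * x * x ^ j * h1
  · simp

/-- Contiguous relation shifting `b`; on coefficients it is
`(b + l + 1) - (l + 1 - j) = b + j` combined with `b (b+1)_j = (b)_j (b + j)`. -/
lemma phi_shift {b : ℝ} (hb : 0 < b) (k l : ℕ) (x : ℝ) :
    b * phi k (l + 1) b x =
      (b + (l + 1)) * phi k (l + 1) (b + 1) x - (l + 1) * phi k l (b + 1) x := by
  rw [phi, phi, phi, mul_sum, mul_sum, mul_sum, ← sum_sub_distrib]
  refine sum_congr rfl fun j _ => ?_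
  have h := (poch_pos_s10 (show 0 < b + 1 by linarith) j).ne'
  have h0 := (poch_pos_s10 hb j).ne'
  have h2 : b * poch (b + 1) j = poch b j * (b + j) := by rw [← poch_succ_left, poch]
  have h1 : ((l : ℝ) + 1) * l.choose j = (l + 1).choose j * (l + 1 - j) := by
    rcases le_or_gt j (l + 1) with hj | hj
    · have := Nat.choose_mul_succ_eq l j
      have h3 : ((l : ℝ) + 1 - j) = ((l + 1 - j : ℕ) : ℝ) := by rw [Nat.cast_sub hj]; simp
      rw [h3, mul_comm]
      exact_mod_cast this
    · simp [Nat.choose_eq_zero_of_lt hj, Nat.choose_eq_zero_of_lt (show l < j by omega)]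
  field_simp
  linear_combination ((k.choose j : ℝ) * (l + 1).choose j * x ^ j) * h2 +
    poch b j * k.choose j * x ^ j * h1

lemma poch_div_factorial (b : ℝ) (n : ℕ) :
    poch b n / n.factorial = Ring.choose (b + n - 1) n := by
  have h : (ascPochhammer ℕ n).smeval b = poch b n := by
    rw [Polynomial.ascPochhammer_smeval_eq_eval]
    induction n with
    | zero => simp [poch]
    | succ n ih => rw [ascPochhammer_succ_eval, ih, poch]
  rw [← Ring.multichoose_eq, ← h, ← Ring.factorial_nsmul_multichoose_eq_ascPochhammer,
    nsmul_eq_mul, mul_div_cancel_left₀]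
  positivity

lemma hasSum_binomial (b : ℝ) {z : ℝ} (hz : |z| < 1) :
    HasSum (fun n : ℕ => poch b n / n.factorial * z ^ n) ((1 - z) ^ (-b)) := by
  have h := (Real.one_div_one_sub_rpow_hasFPowerSeriesOnBall_zero b).hasSum (y := z)
    (by simpa [enorm_eq_nnnorm, ← NNReal.coe_lt_coe] using hz)
  have hp : 0 ≤ 1 - z := by linarith [(abs_lt.1 hz).2]
  simpa [FormalMultilinearSeries.ofScalars_apply_eq, poch_div_factorial, Real.rpow_neg hp,
    mul_comm] using h

/-- The summand of the series, with `u` standing for `1 - 1 / c`. -/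
def kernelTerm (u z : ℝ) (k l : ℕ) (b : ℝ) (n : ℕ) : ℝ :=
  poch b n / n.factorial * z ^ n * phi n k b u * phi n l b u

/-- The closed form of the sum, with `q` standing for `1 - z / c` and `w` for the argument
`z * (1 - c) ^ 2 / (z - c) ^ 2` of the hypergeometric factor. -/
def kernelSum (z q w : ℝ) (k l : ℕ) (b : ℝ) : ℝ :=
  (1 - z) ^ (-b - k - l) * q ^ (k + l) * phi k l b w

lemma phi_succ_sub (n k : ℕ) {b : ℝ} (hb : 0 < b) (u : ℝ) :
    phi (n + 1) (k + 1) b u = phi (n + 1) k b u + (n + 1) * u / b * phi n k (b + 1) u := by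
  rw [phi_comm, phi_succ_left hb, phi_comm k, phi_comm k]

lemma phi_succ_both (n l : ℕ) {b : ℝ} (hb : 0 < b) (u : ℝ) :
    b * phi (n + 1) (l + 1) b u = (b + (l + 1)) * phi n (l + 1) (b + 1) u -
      (l + 1) * (1 - u) * phi n l (b + 1) u := by
  have h := phi_shift hb n l u
  rw [phi_succ_left hb]
  field_simp
  linear_combination h

lemma poch_div_factorial_succ {b : ℝ} (hb : 0 < b) (n : ℕ) :
    poch b (n + 1) / (n + 1).factorial * ((n + 1) / b) = poch (b + 1) n / n.factorial := by
  rw [poch_succ_left, Nat.factorial_succ]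
  push_cast
  field_simp

lemma kernelTerm_succ_zero {b : ℝ} (hb : 0 < b) (u z : ℝ) (k n : ℕ) :
    kernelTerm u z (k + 1) 0 b (n + 1) - kernelTerm u z k 0 b (n + 1) =
      u * z * kernelTerm u z k 0 (b + 1) n := by
  simp only [kernelTerm, phi_succ_sub n k hb, ← poch_div_factorial_succ hb, phi_zero_right]
  ring

lemma kernelTerm_succ_succ {b : ℝ} (hb : 0 < b) (u z : ℝ) (k l n : ℕ) :
    kernelTerm u z (k + 1) (l + 1) b (n + 1) - kernelTerm u z k (l + 1) b (n + 1) =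
      u * z / b * ((b + (l + 1)) * kernelTerm u z k (l + 1) (b + 1) n -
        (l + 1) * (1 - u) * kernelTerm u z k l (b + 1) n) := by
  have h := phi_succ_both n l hb u
  have h' : phi (n + 1) (l + 1) b u = ((b + (l + 1)) * phi n (l + 1) (b + 1) u -
      (l + 1) * (1 - u) * phi n l (b + 1) u) / b := by
    rw [← h]; field_simp
  simp only [kernelTerm, phi_succ_sub n k hb, ← poch_div_factorial_succ hb, h']
  ring

lemma kernelSum_succ_zero {z q u : ℝ} (hz : z < 1) (hq : q = 1 - z + u * z) (w : ℝ)
    (k : ℕ) (b : ℝ) :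
    kernelSum z q w (k + 1) 0 b - kernelSum z q w k 0 b =
      u * z * kernelSum z q w k 0 (b + 1) := by
  have hp : 1 - z ≠ 0 := by linarith
  have e1 : (1 - z) ^ (-b - k) = (1 - z) ^ (-b - k - 1) * (1 - z) := by
    rw [← Real.rpow_add_one hp]; congr 1; ring
  have e2 : -b - ((k : ℝ) + 1) = -b - k - 1 := by ring
  have e3 : -(b + 1) - (k : ℝ) = -b - k - 1 := by ring
  simp only [kernelSum, phi_zero_right, Nat.cast_add, Nat.cast_one, Nat.cast_zero, sub_zero,
    e2, e3, e1]
  rw [add_zero, add_zero, pow_succ]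
  linear_combination (1 - z) ^ (-b - k - 1) * q ^ k * hq

lemma kernelSum_succ_succ {z q u w b : ℝ} (hz : z < 1) (hq : q = 1 - z + u * z)
    (hw : w * q ^ 2 = z * u ^ 2) (hb : 0 < b) (k l : ℕ) :
    kernelSum z q w (k + 1) (l + 1) b - kernelSum z q w k (l + 1) b =
      u * z / b * ((b + (l + 1)) * kernelSum z q w k (l + 1) (b + 1) -
        (l + 1) * (1 - u) * kernelSum z q w k l (b + 1)) := by
  have hp : 1 - z ≠ 0 := by linarith
  set P := (1 - z) ^ (-b - k - l - 2) with hP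
  have e1 : (1 - z) ^ (-b - k - (l + 1)) = P * (1 - z) := by
    rw [hP, ← Real.rpow_add_one hp]; congr 1; ring
  have e2 : (1 - z) ^ (-b - (k + 1) - (l + 1)) = P := by rw [hP]; congr 1; ring
  have e3 : (1 - z) ^ (-(b + 1) - k - (l + 1)) = P := by rw [hP]; congr 1; ring
  have e4 : (1 - z) ^ (-(b + 1) - k - l) = P * (1 - z) := by
    rw [hP, ← Real.rpow_add_one hp]; congr 1; ring
  have hs := phi_shift hb k l w
  have hw' : w * q ^ 2 = u * z * (q - (1 - u) * (1 - z)) := by rw [hw, hq]; ring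
  simp only [kernelSum, Nat.cast_add, Nat.cast_one, e1, e2, e3, e4, phi_succ_left hb]
  have p1 : q ^ (k + 1 + (l + 1)) = q ^ (k + l) * q ^ 2 := by ring
  have p2 : q ^ (k + (l + 1)) = q ^ (k + l) * q := by ring
  rw [p1, p2]
  generalize q ^ (k + l) = Q
  generalize phi k (l + 1) b w = F at *
  generalize phi k (l + 1) (b + 1) w = G at *
  generalize phi k l (b + 1) w = H at *
  have hG : (b + (l + 1)) * G = b * F + (l + 1) * H := by linarith
  have e5 : u * z / b * ((b + (l + 1)) * (P * (Q * q) * G) -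
      (l + 1) * (1 - u) * (P * (1 - z) * Q * H)) =
      u * z / b * (P * Q * (q * (b * F + (l + 1) * H) - (l + 1) * (1 - u) * (1 - z) * H)) := by
    rw [← hG]; ring
  rw [e5]
  field_simp
  linear_combination P * Q * (l + 1) * H * hw' + P * Q * b * F * q * hq

/-- If `f - g` vanishes at `0` and is `h` shifted by one index, then sums of `g` and `h` give the
sum of `f`. -/
lemma hasSum_of_shift {f g h : ℕ → ℝ} {A B C : ℝ} (hg : HasSum g B) (hh : HasSum h C)
    (h0 : f 0 = g 0) (hs : ∀ n, f (n + 1) - g (n + 1) = h n) (hA : A - B = C) : HasSum f A := by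
  have h1 : HasSum (fun n => f n - g n) C := by
    have := (hasSum_nat_add_iff (f := fun n => f n - g n) (g := C) 1).1 (by simpa [hs] using hh)
    simpa [h0] using this
  have h2 := hg.add h1
  rw [← hA] at h2
  simpa using h2

section Kernel

variable {z q u w : ℝ}

lemma kernelTerm_at_zero (u z : ℝ) (k l : ℕ) (b : ℝ) : kernelTerm u z k l b 0 = 1 := by
  simp [kernelTerm, poch]

lemma hasSum_kernel_zero (hz : |z| < 1) (hq : q = 1 - z + u * z) (k : ℕ) {b : ℝ} (hb : 0 < b) :
    HasSum (kernelTerm u z k 0 b) (kernelSum z q w k 0 b) := by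
  induction k generalizing b with
  | zero =>
    have e : kernelTerm u z 0 0 b = fun n : ℕ => poch b n / n.factorial * z ^ n := by
      funext n; simp [kernelTerm]
    rw [e]
    simpa [kernelSum] using hasSum_binomial b hz
  | succ k ih =>
    exact hasSum_of_shift (ih hb) ((ih (b := b + 1) (by linarith)).mul_left (u * z))
      (by simp [kernelTerm_at_zero]) (kernelTerm_succ_zero hb u z k)
      (kernelSum_succ_zero (abs_lt.1 hz).2 hq w k b)

lemma hasSum_kernel (hz : |z| < 1) (hq : q = 1 - z + u * z) (hw : w * q ^ 2 = z * u ^ 2)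
    (k l : ℕ) {b : ℝ} (hb : 0 < b) :
    HasSum (kernelTerm u z k l b) (kernelSum z q w k l b) := by
  induction k generalizing l b with
  | zero =>
    have h := hasSum_kernel_zero (w := w) hz hq l hb
    have e : kernelTerm u z 0 l b = kernelTerm u z l 0 b := by
      funext n; simp [kernelTerm]
    rw [e]
    simpa [kernelSum] using h
  | succ k ih =>
    cases l with
    | zero => exact hasSum_kernel_zero hz hq (k + 1) hb
    | succ l =>
      have hb' : 0 < b + 1 := by linarith
      exact hasSum_of_shift (ih (l + 1) hb)
        ((((ih (l + 1) hb').mul_left (b + (l + 1))).sub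
          ((ih l hb').mul_left ((l + 1) * (1 - u)))).mul_left (u * z / b))
        (by simp [kernelTerm_at_zero]) (kernelTerm_succ_succ hb u z k l)
        (kernelSum_succ_succ (abs_lt.1 hz).2 hq hw hb k l)

end Kernel

theorem stmt_10 (b c : ℝ) (hb : 0 < b) (hc0 : 0 < c) (hc1 : c < 1)
    (ξ ξ' : ℕ) (z : ℝ) (hz : |z| < 1) (hzc : z ≠ c) :
    HasSum (fun n : ℕ =>
        (poch b n / n.factorial) * z ^ n * meixner n ξ b c * meixner n ξ' b c)
      ((1 - z) ^ (-b - ξ - ξ') * (1 - z / c) ^ (ξ + ξ') *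
        F21nn ξ ξ' b (z * (1 - c) ^ 2 / (z - c) ^ 2)) := by
  simp only [meixner_eq_phi, F21nn_eq_phi]
  have h1 : z - c ≠ 0 := sub_ne_zero.2 hzc
  refine hasSum_kernel (q := 1 - z / c) (u := 1 - 1 / c) hz (by ring) ?_ ξ ξ' hb
  field_simp
  ring
end
end

section
/- Let β > 0 and x, y be real numbers. For real γ with 0 < γ < 1, set a(γ) = β − x²/(1−γ²), b(γ) = β − y²/(1−γ²) and z(γ) = −(1/4)(γ − 1/γ)². Then for all γ < 1 sufficiently close to 1 one has |z(γ)| < 1 so that the series F(γ) = ∑_{j=0}^{∞} (a(γ))_j (b(γ))_j z(γ)^j / ((β)_j j!) converges, and lim_{γ→1⁻} F(γ) = ∑_{j=0}^{∞} (−x²y²/4)^j / ((β)_j j!), i.e. the limit is the value ₀F₁(; β; −x²y²/4). -/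
/-!
Put `ε = 1 - γ²`, so that `z(γ) = -ε² / (4γ²)`. Distributing one factor `ε` over each factor of
the two numerator Pochhammer symbols removes the singularity at `γ = 1`: the `j`-th term becomes
`∏_{i<j} (ε(β+i) - x²)(ε(β+i) - y²) · (-1/(4γ²)) / ((β+i)(i+1))`,
which is continuous at `γ = 1` with value the `j`-th term of the limit series (`term_eq`,
`limit_term_eq`). For `γ < 1` with `γ² ≥ 1/2`, the `i`-th factor is at most
`R_i = ((β+i)/2 + x²)((β+i)/2 + y²) · (1/2) / ((β+i)(i+1))` in absolute value, and `R_i → 1/8`, so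
the products of the `R_i` are summable by the ratio test (`summable_majorant`). Dominated
convergence for series then gives the limit.
-/

noncomputable section

/-- The product `∏_{i<j} (e(β+i) - u)(e(β+i) - v) c / ((β+i)(i+1))`: the desingularised `j`-th
hypergeometric term, with `u = x²`, `v = y²`, `e = 1 - γ²` and `c = -1/(4γ²)`. -/
def regTerm (β u v e c : ℝ) (j : ℕ) : ℝ :=
  ∏ i ∈ Finset.range j, ((e * (β + i) - u) * (e * (β + i) - v) * c / ((β + i) * (i + 1)))

lemma poch_pos_s13 {β : ℝ} (hβ : 0 < β) (j : ℕ) : 0 < poch β j := by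
  induction j with
  | zero => simp [poch]
  | succ n ih => rw [poch]; positivity

/-- Factor by factor, this is `(β + i - x²/ε)(β + i - y²/ε) · ε² = (ε(β+i) - x²)(ε(β+i) - y²)`
with `ε = 1 - γ²`, as `z(γ) = -ε²/(4γ²)`. -/
lemma term_eq {β γ : ℝ} (hβ : 0 < β) (h0 : 0 < γ) (h1 : γ < 1) (x y : ℝ) (j : ℕ) :
    poch (β - x ^ 2 / (1 - γ ^ 2)) j * poch (β - y ^ 2 / (1 - γ ^ 2)) j *
      (-(1 / 4) * (γ - 1 / γ) ^ 2) ^ j / (poch β j * j.factorial) =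
    regTerm β (x ^ 2) (y ^ 2) (1 - γ ^ 2) (-1 / (4 * γ ^ 2)) j := by
  have he : 1 - γ ^ 2 ≠ 0 := by nlinarith
  induction j with
  | zero => simp [regTerm, poch]
  | succ n ih =>
    have hp := (poch_pos_s13 hβ n).ne'
    have hb : β + n ≠ 0 := by positivity
    have hn : (n : ℝ) + 1 ≠ 0 := by positivity
    have hf : (n.factorial : ℝ) ≠ 0 := by positivity
    rw [regTerm, Finset.prod_range_succ, ← regTerm, ← ih]
    simp only [poch, pow_succ _ n, Nat.factorial_succ, Nat.cast_mul, Nat.cast_add, Nat.cast_one]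
    have hfac : (β - x ^ 2 / (1 - γ ^ 2) + n) * (β - y ^ 2 / (1 - γ ^ 2) + n) *
        (-(1 / 4) * (γ - 1 / γ) ^ 2) = ((1 - γ ^ 2) * (β + n) - x ^ 2) *
        ((1 - γ ^ 2) * (β + n) - y ^ 2) * (-1 / (4 * γ ^ 2)) := by
      field_simp
      ring
    rw [← hfac, div_mul_div_comm]
    congr 1 <;> ring

lemma limit_term_eq (β x y : ℝ) (j : ℕ) :
    (-(x ^ 2 * y ^ 2) / 4) ^ j / (poch β j * j.factorial) =
    regTerm β (x ^ 2) (y ^ 2) 0 (-1 / 4) j := by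
  induction j with
  | zero => simp [regTerm, poch]
  | succ n ih =>
    rw [regTerm, Finset.prod_range_succ, ← regTerm, ← ih, div_mul_div_comm]
    simp only [poch, pow_succ _ n, Nat.factorial_succ, Nat.cast_mul, Nat.cast_add, Nat.cast_one]
    congr 1 <;> ring

/-- The majorant is `regTerm` with the signs of `u`, `v`, `c` chosen to make every factor
positive. -/
lemma abs_regTerm_le {β u v e c : ℝ} (hβ : 0 < β) (hu : 0 ≤ u) (hv : 0 ≤ v)
    (he0 : 0 ≤ e) (he : e ≤ 1 / 2) (hc : |c| ≤ 1 / 2) (j : ℕ) :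
    |regTerm β u v e c j| ≤ regTerm β (-u) (-v) (1 / 2) (1 / 2) j := by
  rw [regTerm, regTerm, Finset.abs_prod]
  refine Finset.prod_le_prod (fun i _ => abs_nonneg _) fun i _ => ?_
  have hb : 0 < β + i := by positivity
  have key : ∀ w : ℝ, 0 ≤ w → |e * (β + i) - w| ≤ 1 / 2 * (β + i) - -w := fun w hw => by
    have h1 : e * (β + i) ≤ 1 / 2 * (β + i) := by gcongr
    have h2 : 0 ≤ e * (β + i) := by positivity
    rw [abs_le]
    constructor <;> linarith
  rw [abs_div, abs_mul, abs_mul, abs_of_pos (show 0 < (β + i) * ((i : ℝ) + 1) by positivity)]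
  have h1 := key u hu
  have h2 := key v hv
  have h3 := (abs_nonneg _).trans h1
  have h4 := mul_nonneg h3 ((abs_nonneg _).trans h2)
  gcongr

lemma summable_majorant {β u v : ℝ} (hβ : 0 < β) (hu : 0 ≤ u) (hv : 0 ≤ v) :
    Summable (regTerm β (-u) (-v) (1 / 2) (1 / 2)) := by
  have hpos : ∀ i : ℕ, 0 < (1 / 2 * (β + i) - -u) * (1 / 2 * (β + i) - -v) * (1 / 2) /
      ((β + i) * ((i : ℝ) + 1)) := fun i => by
    rw [sub_neg_eq_add, sub_neg_eq_add]
    positivity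
  have hne : ∀ j, 0 < regTerm β (-u) (-v) (1 / 2) (1 / 2) j := fun j =>
    Finset.prod_pos fun i _ => hpos i
  refine summable_of_ratio_test_tendsto_lt_one (l := 1 / 8) (by norm_num)
    (Filter.Eventually.of_forall fun j => (hne j).ne') ?_
  have hratio : ∀ j : ℕ, ‖regTerm β (-u) (-v) (1 / 2) (1 / 2) (j + 1)‖ /
      ‖regTerm β (-u) (-v) (1 / 2) (1 / 2) j‖ =
      (1 / 2 + u / (β + j)) * (1 / 2 + (β / 2 + v - 1 / 2) / (j + 1)) * (1 / 2) := fun j => by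
    have hb : β + j ≠ 0 := by positivity
    have hj : (j : ℝ) + 1 ≠ 0 := by positivity
    rw [Real.norm_of_nonneg (hne _).le, Real.norm_of_nonneg (hne _).le,
      div_eq_iff (hne j).ne', regTerm, Finset.prod_range_succ, ← regTerm, mul_comm]
    congr 1
    field_simp
    ring
  simp_rw [hratio]
  have hnat : Filter.Tendsto (fun j : ℕ => (j : ℝ)) Filter.atTop Filter.atTop :=
    tendsto_natCast_atTop_atTop
  have t1 : Filter.Tendsto (fun j : ℕ => u / (β + j)) Filter.atTop (nhds 0) :=
    (Filter.tendsto_atTop_add_const_left _ β hnat).const_div_atTop u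
  have t2 : Filter.Tendsto (fun j : ℕ => (β / 2 + v - 1 / 2) / ((j : ℝ) + 1)) Filter.atTop
      (nhds 0) :=
    (Filter.tendsto_atTop_add_const_right _ 1 hnat).const_div_atTop _
  convert ((t1.const_add (1 / 2)).mul (t2.const_add (1 / 2))).mul_const (1 / 2) using 2
  norm_num

theorem stmt_13 (β x y : ℝ) (hβ : 0 < β) :
    (∀ᶠ γ in nhdsWithin (1 : ℝ) (Set.Ioo 0 1),
      |(-(1 / 4) * (γ - 1 / γ) ^ 2)| < 1 ∧
      Summable (fun j : ℕ =>
        poch (β - x ^ 2 / (1 - γ ^ 2)) j * poch (β - y ^ 2 / (1 - γ ^ 2)) j *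
          (-(1 / 4) * (γ - 1 / γ) ^ 2) ^ j / (poch β j * j.factorial))) ∧
    Filter.Tendsto (fun γ : ℝ =>
        ∑' j : ℕ,
          poch (β - x ^ 2 / (1 - γ ^ 2)) j * poch (β - y ^ 2 / (1 - γ ^ 2)) j *
            (-(1 / 4) * (γ - 1 / γ) ^ 2) ^ j / (poch β j * j.factorial))
      (nhdsWithin (1 : ℝ) (Set.Ioo 0 1))
      (nhds (∑' j : ℕ, (-(x ^ 2 * y ^ 2) / 4) ^ j / (poch β j * j.factorial))) := by
  have hnear : ∀ᶠ γ in nhdsWithin (1 : ℝ) (Set.Ioo 0 1), 0 < γ ∧ γ < 1 ∧ 1 / 2 ≤ γ ^ 2 := by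
    have h1 : ∀ᶠ γ : ℝ in nhds 1, 1 / 2 < γ ^ 2 :=
      (continuous_pow 2).continuousAt.eventually_const_lt (by norm_num)
    filter_upwards [self_mem_nhdsWithin, h1.filter_mono nhdsWithin_le_nhds] with γ hγ h
    exact ⟨hγ.1, hγ.2, h.le⟩
  have hsum := summable_majorant hβ (sq_nonneg x) (sq_nonneg y)
  have hbound : ∀ γ : ℝ, γ < 1 → 0 < γ → 1 / 2 ≤ γ ^ 2 → ∀ j,
      ‖regTerm β (x ^ 2) (y ^ 2) (1 - γ ^ 2) (-1 / (4 * γ ^ 2)) j‖ ≤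
        regTerm β (-x ^ 2) (-y ^ 2) (1 / 2) (1 / 2) j := fun γ h1 h0 h j => by
    refine abs_regTerm_le hβ (sq_nonneg x) (sq_nonneg y) (by nlinarith) (by linarith) ?_ j
    rw [abs_div, abs_neg, abs_one, abs_of_pos (by positivity), div_le_iff₀ (by positivity)]
    linarith
  refine ⟨?_, ?_⟩
  · filter_upwards [hnear] with γ ⟨h0, h1, h⟩
    refine ⟨?_, ?_⟩
    · have hz : -(1 / 4) * (γ - 1 / γ) ^ 2 = -((1 - γ ^ 2) ^ 2 / (4 * γ ^ 2)) := by
        field_simp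
        ring
      rw [hz, abs_neg, abs_of_nonneg (by positivity), div_lt_one (by positivity)]
      have h2 : γ ^ 2 < 1 := by nlinarith
      nlinarith
    · simp_rw [term_eq hβ h0 h1]
      exact Summable.of_norm_bounded hsum (hbound γ h1 h0 h)
  · simp_rw [limit_term_eq]
    have hlim : Filter.Tendsto
        (fun γ : ℝ => ∑' j, regTerm β (x ^ 2) (y ^ 2) (1 - γ ^ 2) (-1 / (4 * γ ^ 2)) j)
        (nhdsWithin (1 : ℝ) (Set.Ioo 0 1))
        (nhds (∑' j, regTerm β (x ^ 2) (y ^ 2) 0 (-1 / 4) j)) := by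
      refine tendsto_tsum_of_dominated_convergence hsum (fun j => ?_) ?_
      · have hcont : ContinuousAt
            (fun γ : ℝ => regTerm β (x ^ 2) (y ^ 2) (1 - γ ^ 2) (-1 / (4 * γ ^ 2)) j) 1 := by
          have hc : ContinuousAt (fun γ : ℝ => -1 / (4 * γ ^ 2)) 1 :=
            ContinuousAt.div (by fun_prop) (by fun_prop) (by norm_num)
          unfold regTerm
          refine tendsto_finsetProd _ fun i _ => ?_
          exact ((ContinuousAt.mul (by fun_prop) hc).div_const _)
        have := hcont.tendsto.mono_left (nhdsWithin_le_nhds (s := Set.Ioo 0 1))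
        simpa using this
      · filter_upwards [hnear] with γ ⟨h0, h1, h⟩ j
        exact hbound γ h1 h0 h j
    refine hlim.congr' ?_
    filter_upwards [hnear] with γ ⟨h0, h1, _⟩
    exact tsum_congr fun j => (term_eq hβ h0 h1 x y j).symm
end
end

section
/- Fix real β > 0 and γ ∈ ℝ. With the operators q̂, p̂, Ĥ defined on finitely supported complex sequences as in the context, one has the Hamilton–Lie equations as operator identities: Ĥ∘q̂ − q̂∘Ĥ = −i·p̂ and Ĥ∘p̂ − p̂∘Ĥ = i·q̂. -/
/-!
In the basis `e_n`, the operator `H` is diagonal with eigenvalue gap `1` between neighbours, so for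
an operator moving `e_n` to `e_{n±1}` the commutator with `H` keeps the raising part and negates the
lowering part. Up to the factor `∓i` this sign change exchanges `q` and `p`. Both identities are
checked on basis vectors, separately for even and odd indices.
-/

noncomputable section

theorem stmt_14 (β γ : ℝ) (hβ : 0 < β)
    (q p H : (ℕ →₀ ℂ) →ₗ[ℂ] (ℕ →₀ ℂ))
    (hq1 : ∀ n : ℕ, q (Finsupp.single (2 * n) 1) =
      ((γ * Real.sqrt n : ℝ) : ℂ) • Finsupp.single (2 * n - 1) 1 +
      ((Real.sqrt (β + n) : ℝ) : ℂ) • Finsupp.single (2 * n + 1) 1)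
    (hq2 : ∀ n : ℕ, q (Finsupp.single (2 * n + 1) 1) =
      ((Real.sqrt (β + n) : ℝ) : ℂ) • Finsupp.single (2 * n) 1 +
      ((γ * Real.sqrt (n + 1) : ℝ) : ℂ) • Finsupp.single (2 * n + 2) 1)
    (hp1 : ∀ n : ℕ, p (Finsupp.single (2 * n) 1) =
      Complex.I • (((Real.sqrt (β + n) : ℝ) : ℂ) • Finsupp.single (2 * n + 1) 1 -
        ((γ * Real.sqrt n : ℝ) : ℂ) • Finsupp.single (2 * n - 1) 1))
    (hp2 : ∀ n : ℕ, p (Finsupp.single (2 * n + 1) 1) =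
      Complex.I • (((γ * Real.sqrt (n + 1) : ℝ) : ℂ) • Finsupp.single (2 * n + 2) 1 -
        ((Real.sqrt (β + n) : ℝ) : ℂ) • Finsupp.single (2 * n) 1))
    (hH : ∀ n : ℕ, H (Finsupp.single n 1) = ((n : ℂ) + 1 / 2) • Finsupp.single n 1) :
    H ∘ₗ q - q ∘ₗ H = (-Complex.I) • p ∧ H ∘ₗ p - p ∘ₗ H = Complex.I • q := by
  have key : ∀ m : ℕ, (H ∘ₗ q - q ∘ₗ H) (Finsupp.single m 1) =
        ((-Complex.I) • p) (Finsupp.single m 1) ∧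
      (H ∘ₗ p - p ∘ₗ H) (Finsupp.single m 1) = (Complex.I • q) (Finsupp.single m 1) := by
    intro m
    obtain ⟨n, rfl | rfl⟩ := m.even_or_odd'
    · rcases n with _ | n
      -- At `n = 0` the index `2 * n - 1` truncates to `0`, but its coefficient `γ * √0` vanishes.
      · have q0 := hq1 0
        have p0 := hp1 0
        simp only [Nat.cast_zero, Real.sqrt_zero, mul_zero, Complex.ofReal_zero, zero_smul,
          zero_add, sub_zero] at q0 p0
        simp only [mul_zero, LinearMap.sub_apply, LinearMap.comp_apply, LinearMap.smul_apply,
          q0, p0, hH, map_smul]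
        constructor <;> match_scalars <;> grind [Complex.I_mul_I]
      · have q1 := hq1 (n + 1)
        have p1 := hp1 (n + 1)
        rw [show 2 * (n + 1) - 1 = 2 * n + 1 by omega] at q1 p1
        simp only [LinearMap.sub_apply, LinearMap.comp_apply, LinearMap.smul_apply,
          q1, p1, hH, map_smul, map_add, map_sub]
        constructor <;> match_scalars <;> grind [Complex.I_mul_I]
    · simp only [LinearMap.sub_apply, LinearMap.comp_apply, LinearMap.smul_apply,
        hq2, hp2, hH, map_smul, map_add, map_sub]
      constructor <;> match_scalars <;> grind [Complex.I_mul_I]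
  exact ⟨Finsupp.lhom_ext' fun m => LinearMap.ext_ring (key m).1,
    Finsupp.lhom_ext' fun m => LinearMap.ext_ring (key m).2⟩
end
end

section
/- Fix real β > 0 and γ ∈ ℝ. With the operators q̂, p̂ defined on finitely supported complex sequences as in the context, the commutator [q̂, p̂] = q̂∘p̂ − p̂∘q̂ is diagonal, with (q̂∘p̂ − p̂∘q̂) e_{2n} = 2i(β + (1−γ²)n) e_{2n} for all n ≥ 0 and (q̂∘p̂ − p̂∘q̂) e_{2n−1} = 2i((1−β) − (1−γ²)n) e_{2n−1} for all n ≥ 1. -/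
/-!
Write `R_n = √(β + n)`, `S_n = γ √n` and `e_k = Finsupp.single k 1`.
Each basis vector is sent by `q` and `p` to combinations of its two neighbours, so `q ∘ p` and `p ∘ q`
reach only distance `0` and `2`. The distance-two terms agree and cancel in the commutator, while the
diagonal terms have opposite signs and add up to `2i (R_n² - S_n²)` on `e_{2n}` and
`2i (S_{n+1}² - R_n²)` on `e_{2n+1}`. Substituting `R_n² = β + n` and `S_n² = γ² n` gives the claim.
-/

noncomputable section

theorem stmt_15 (β γ : ℝ) (hβ : 0 < β)
    (q p : (ℕ →₀ ℂ) →ₗ[ℂ] (ℕ →₀ ℂ))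
    (hq1 : ∀ n : ℕ, q (Finsupp.single (2 * n) 1) =
      ((γ * Real.sqrt n : ℝ) : ℂ) • Finsupp.single (2 * n - 1) 1 +
      ((Real.sqrt (β + n) : ℝ) : ℂ) • Finsupp.single (2 * n + 1) 1)
    (hq2 : ∀ n : ℕ, q (Finsupp.single (2 * n + 1) 1) =
      ((Real.sqrt (β + n) : ℝ) : ℂ) • Finsupp.single (2 * n) 1 +
      ((γ * Real.sqrt (n + 1) : ℝ) : ℂ) • Finsupp.single (2 * n + 2) 1)
    (hp1 : ∀ n : ℕ, p (Finsupp.single (2 * n) 1) =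
      Complex.I • (((Real.sqrt (β + n) : ℝ) : ℂ) • Finsupp.single (2 * n + 1) 1 -
        ((γ * Real.sqrt n : ℝ) : ℂ) • Finsupp.single (2 * n - 1) 1))
    (hp2 : ∀ n : ℕ, p (Finsupp.single (2 * n + 1) 1) =
      Complex.I • (((γ * Real.sqrt (n + 1) : ℝ) : ℂ) • Finsupp.single (2 * n + 2) 1 -
        ((Real.sqrt (β + n) : ℝ) : ℂ) • Finsupp.single (2 * n) 1)) :
    (∀ n : ℕ, (q ∘ₗ p - p ∘ₗ q) (Finsupp.single (2 * n) 1) =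
      (2 * Complex.I * ((β : ℂ) + (1 - (γ : ℂ) ^ 2) * n)) • Finsupp.single (2 * n) 1) ∧
    (∀ n : ℕ, 1 ≤ n → (q ∘ₗ p - p ∘ₗ q) (Finsupp.single (2 * n - 1) 1) =
      (2 * Complex.I * ((1 - (β : ℂ)) - (1 - (γ : ℂ) ^ 2) * n)) •
        Finsupp.single (2 * n - 1) 1) := by
  have hR (n : ℕ) : ((Real.sqrt (β + n) : ℝ) : ℂ) ^ 2 = β + n := by
    rw [← Complex.ofReal_pow, Real.sq_sqrt (by positivity)]
    push_cast
    rfl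
  have hS (n : ℕ) : ((Real.sqrt (n + 1) : ℝ) : ℂ) ^ 2 = n + 1 := by
    rw [← Complex.ofReal_pow, Real.sq_sqrt (by positivity)]
    push_cast
    rfl
  refine ⟨fun n => ?_, fun n hn => ?_⟩
  · cases n with
    | zero =>
      -- Here `2 * 0 - 1 = 0` in `ℕ`, but the term carries the coefficient `γ * √0 = 0`.
      have q0 := hq1 0
      have p0 := hp1 0
      have q1 := hq2 0
      have p1 := hp2 0
      have r0 := hR 0
      simp only [Nat.cast_zero, Real.sqrt_zero, mul_zero, Complex.ofReal_zero, zero_smul, zero_add,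
        sub_zero, add_zero] at q0 p0 q1 p1 r0 ⊢
      simp only [LinearMap.sub_apply, LinearMap.comp_apply, q0, p0, q1, p1, map_smul]
      match_scalars <;>
        first
        | ring1
        | linear_combination (2 * Complex.I) * r0
    | succ n =>
      -- The left neighbour of `e_{2(n+1)}` is the odd vector `e_{2n+1}`, written in the form of `hq2`.
      have hi : 2 * (n + 1) - 1 = 2 * n + 1 := by omega
      have q0 := hq1 (n + 1)
      have p0 := hp1 (n + 1)
      have q2 := hq2 (n + 1)
      have p2 := hp2 (n + 1)
      have q1 := hq2 n
      have p1 := hp2 n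
      have r := hR (n + 1)
      have s := hS n
      rw [show 2 * n + 2 = 2 * (n + 1) by ring] at q1 p1
      rw [hi] at q0 p0
      push_cast at q0 p0 q1 p1 q2 p2 r ⊢
      simp only [LinearMap.sub_apply, LinearMap.comp_apply, q0, p0, q1, p1, q2, p2, map_smul,
        map_add, map_sub]
      match_scalars <;>
        first
        | ring1
        | linear_combination (2 * Complex.I) * r - 2 * Complex.I * γ ^ 2 * s
  · obtain ⟨n, rfl⟩ := Nat.exists_eq_add_of_le' hn
    have hi : 2 * (n + 1) - 1 = 2 * n + 1 := by omega
    have q0 := hq1 n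
    have p0 := hp1 n
    have q2 := hq1 (n + 1)
    have p2 := hp1 (n + 1)
    have q1 := hq2 n
    have p1 := hp2 n
    have r := hR n
    have s := hS n
    rw [show 2 * n + 2 = 2 * (n + 1) by ring] at q1 p1
    rw [hi] at q2 p2 ⊢
    push_cast at q0 p0 q1 p1 q2 p2 r ⊢
    simp only [LinearMap.sub_apply, LinearMap.comp_apply, q0, p0, q1, p1, q2, p2, map_smul,
      map_add, map_sub]
    match_scalars <;>
      first
      | ring1
      | linear_combination (-2 * Complex.I) * r + 2 * Complex.I * γ ^ 2 * s
end
end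

section
/- Fix real β > 0 and γ ∈ ℝ. With the operators q̂, p̂ defined on finitely supported complex sequences as in the context, the operator (p̂² + q̂²)/2 is diagonal: ((p̂∘p̂ + q̂∘q̂)/2) e_n = ( ((γ²+1)/2)·n + β ) e_n when n is even, and ((p̂∘p̂ + q̂∘q̂)/2) e_n = ( ((γ²+1)/2)·n + β + (γ²−1)/2 ) e_n when n is odd. -/
/-! Write `R n = √(β + n)` and `S n = γ √n`. Both `q` and `p` send a basis vector to a combination
of its two neighbours: `q = L + U` and `p = i (U - L)`, where `L` lowers and `U` raises the index.
Hence in `p² + q² = 2 (L U + U L)` the shifts by `± 2` cancel, and `(p² + q²) / 2` multiplies a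
basis vector by the sum of the squares of the coefficients leading to its neighbours
(`half_sq_add_sq_apply`): `(R n)² + (S n)²` at `e_{2n}` and `(R n)² + (S (n + 1))²` at
`e_{2n+1}`. -/

noncomputable section

/-- The local computation at a vector `x` with lower neighbour `u` and upper neighbour `v`, whose
own outer neighbours are `y` and `z`. The coefficient along an edge is the same in both
directions, which is why the squares `a ^ 2` and `b ^ 2` appear. -/
theorem half_sq_add_sq_apply {M : Type*} [AddCommGroup M] [Module ℂ M] (q p : M →ₗ[ℂ] M)
    (y u x v z : M) (a b c d : ℂ)
    (hqx : q x = a • u + b • v) (hpx : p x = Complex.I • (b • v - a • u))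
    (hqu : q u = c • y + a • x) (hpu : p u = Complex.I • (a • x - c • y))
    (hqv : q v = b • x + d • z) (hpv : p v = Complex.I • (d • z - b • x)) :
    (((1 : ℂ) / 2) • (p ∘ₗ p + q ∘ₗ q)) x = (a ^ 2 + b ^ 2) • x := by
  have hp : p (p x) = (-1 : ℂ) • (b • (d • z - b • x) - a • (a • x - c • y)) := by
    rw [hpx, map_smul, map_sub, map_smul, map_smul, hpv, hpu, ← Complex.I_mul_I]
    module
  simp only [LinearMap.smul_apply, LinearMap.add_apply, LinearMap.comp_apply, hp]
  rw [hqx, map_add, map_smul, map_smul, hqu, hqv]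
  module

theorem stmt_16 (β γ : ℝ) (hβ : 0 < β)
    (q p : (ℕ →₀ ℂ) →ₗ[ℂ] (ℕ →₀ ℂ))
    (hq1 : ∀ n : ℕ, q (Finsupp.single (2 * n) 1) =
      ((γ * Real.sqrt n : ℝ) : ℂ) • Finsupp.single (2 * n - 1) 1 +
      ((Real.sqrt (β + n) : ℝ) : ℂ) • Finsupp.single (2 * n + 1) 1)
    (hq2 : ∀ n : ℕ, q (Finsupp.single (2 * n + 1) 1) =
      ((Real.sqrt (β + n) : ℝ) : ℂ) • Finsupp.single (2 * n) 1 +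
      ((γ * Real.sqrt (n + 1) : ℝ) : ℂ) • Finsupp.single (2 * n + 2) 1)
    (hp1 : ∀ n : ℕ, p (Finsupp.single (2 * n) 1) =
      Complex.I • (((Real.sqrt (β + n) : ℝ) : ℂ) • Finsupp.single (2 * n + 1) 1 -
        ((γ * Real.sqrt n : ℝ) : ℂ) • Finsupp.single (2 * n - 1) 1))
    (hp2 : ∀ n : ℕ, p (Finsupp.single (2 * n + 1) 1) =
      Complex.I • (((γ * Real.sqrt (n + 1) : ℝ) : ℂ) • Finsupp.single (2 * n + 2) 1 -
        ((Real.sqrt (β + n) : ℝ) : ℂ) • Finsupp.single (2 * n) 1)) :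
    (∀ n : ℕ, Even n → (((1 : ℂ) / 2) • (p ∘ₗ p + q ∘ₗ q)) (Finsupp.single n 1) =
      ((((γ : ℂ) ^ 2 + 1) / 2) * n + (β : ℂ)) • Finsupp.single n 1) ∧
    (∀ n : ℕ, Odd n → (((1 : ℂ) / 2) • (p ∘ₗ p + q ∘ₗ q)) (Finsupp.single n 1) =
      ((((γ : ℂ) ^ 2 + 1) / 2) * n + (β : ℂ) + ((γ : ℂ) ^ 2 - 1) / 2) •
        Finsupp.single n 1) := by
  have hR (n : ℕ) : ((Real.sqrt (β + n) : ℝ) : ℂ) ^ 2 = (β : ℂ) + n := by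
    exact_mod_cast Real.sq_sqrt (by positivity : 0 ≤ β + n)
  have hS (n : ℕ) : ((γ * Real.sqrt n : ℝ) : ℂ) ^ 2 = (γ : ℂ) ^ 2 * n := by
    have h : (γ * Real.sqrt n) ^ 2 = γ ^ 2 * n := by
      rw [mul_pow, Real.sq_sqrt (by positivity)]
    exact_mod_cast h
  constructor
  · rintro n ⟨m, rfl⟩
    rw [← two_mul]
    have key : (((1 : ℂ) / 2) • (p ∘ₗ p + q ∘ₗ q)) (Finsupp.single (2 * m) 1) =
        (((γ * Real.sqrt m : ℝ) : ℂ) ^ 2 + ((Real.sqrt (β + m) : ℝ) : ℂ) ^ 2) •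
          Finsupp.single (2 * m) 1 := by
      cases m with
      | zero =>
        -- The truncated index `2 * 0 - 1` is harmless since its coefficient `S 0` vanishes;
        -- the missing neighbours below `e_0` are taken to be `0`.
        refine half_sq_add_sq_apply q p 0 0 _ _ _ _ _ 0 _ ?_ ?_ ?_ ?_ (hq2 0) (hp2 0)
        · simpa using hq1 0
        · simpa using hp1 0
        · simp
        · simp
      | succ k =>
        have hq := hq2 k
        have hp := hp2 k
        rw [← Nat.cast_succ] at hq hp
        exact half_sq_add_sq_apply q p _ _ _ _ _ _ _ _ _ (hq1 (k + 1)) (hp1 (k + 1)) hq hp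
          (hq2 (k + 1)) (hp2 (k + 1))
    rw [key, hR, hS]
    congr 1
    push_cast
    ring
  · rintro n ⟨m, rfl⟩
    have hq := hq2 m
    have hp := hp2 m
    rw [← Nat.cast_succ] at hq hp
    rw [half_sq_add_sq_apply q p _ _ _ _ _ _ _ _ _ hq hp (hq1 m) (hp1 m)
      (hq1 (m + 1)) (hp1 (m + 1)), hR, hS]
    congr 1
    push_cast
    ring
end
end

section
/- Fix real β > 0. With the lowering operators F⁻, G⁻ defined on finitely supported complex sequences as in the context, for every n ∈ ℕ one has (G⁻∘F⁻)^n e_{2n} = (−1)^n √(n!·(β)_n) · e_0 and (G⁻∘F⁻)^n∘G⁻ e_{2n+1} = (−1)^{n+1} √(n!·(β)_{n+1}) · e_0, where (β)_n = β(β+1)···(β+n−1) is the Pochhammer symbol. -/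
/-!
On even basis vectors `G ∘ F` is a weighted shift by two:
`(G ∘ F) e_{2(n+1)} = -√((n+1)(β+n)) e_{2n}`. Iterating `n` times multiplies the weights into
`(-1)^n √(n! (β)_n)`, and prepending `G e_{2n+1} = -√(β+n) e_{2n}` supplies one further
factor `β + n`, which turns `(β)_n` into `(β)_{n+1}`.
-/

noncomputable section

theorem poch_nonneg {β : ℝ} (hβ : 0 < β) (n : ℕ) : 0 ≤ poch β n := by
  induction n with
  | zero => simp [poch]
  | succ n ih => rw [poch]; positivity

theorem stmt_18 (β : ℝ) (hβ : 0 < β)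
    (F G : (ℕ →₀ ℂ) →ₗ[ℂ] (ℕ →₀ ℂ))
    (hF1 : ∀ n : ℕ, F (Finsupp.single (2 * n) 1) =
      ((Real.sqrt n : ℝ) : ℂ) • Finsupp.single (2 * n - 1) 1)
    (hF2 : ∀ n : ℕ, F (Finsupp.single (2 * n + 1) 1) = 0)
    (hG1 : ∀ n : ℕ, G (Finsupp.single (2 * n + 1) 1) =
      (-((Real.sqrt (β + n) : ℝ) : ℂ)) • Finsupp.single (2 * n) 1)
    (hG2 : ∀ n : ℕ, G (Finsupp.single (2 * n) 1) = 0) :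
    ∀ n : ℕ,
      ((G ∘ₗ F) ^ n) (Finsupp.single (2 * n) 1) =
        (((-1 : ℝ) ^ n * Real.sqrt (n.factorial * poch β n) : ℝ) : ℂ) •
          Finsupp.single 0 1 ∧
      (((G ∘ₗ F) ^ n) ∘ₗ G) (Finsupp.single (2 * n + 1) 1) =
        (((-1 : ℝ) ^ (n + 1) * Real.sqrt (n.factorial * poch β (n + 1)) : ℝ) : ℂ) •
          Finsupp.single 0 1 := by
  have step : ∀ n : ℕ, (G ∘ₗ F) (Finsupp.single (2 * (n + 1)) 1) =
      (((-(Real.sqrt (n + 1) * Real.sqrt (β + n)) : ℝ)) : ℂ) • Finsupp.single (2 * n) 1 := by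
    intro n
    have h : 2 * (n + 1) - 1 = 2 * n + 1 := by omega
    rw [LinearMap.comp_apply, hF1, h, map_smul, hG1, smul_smul]
    push_cast
    ring_nf
  have even : ∀ n : ℕ, ((G ∘ₗ F) ^ n) (Finsupp.single (2 * n) 1) =
      (((-1 : ℝ) ^ n * Real.sqrt (n.factorial * poch β n) : ℝ) : ℂ) •
        Finsupp.single 0 1 := by
    intro n
    induction n with
    | zero => simp [poch]
    | succ n ih =>
      rw [pow_succ, Module.End.mul_apply, step, map_smul, ih, smul_smul, ← Complex.ofReal_mul]
      congr 2
      have hp := poch_nonneg hβ n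
      have e : ((n + 1).factorial : ℝ) * poch β (n + 1) =
          ((n + 1 : ℝ) * (β + n)) * (n.factorial * poch β n) := by
        rw [poch, Nat.factorial_succ]
        push_cast
        ring
      rw [e, Real.sqrt_mul (by positivity : (0 : ℝ) ≤ (n + 1) * (β + n)),
        Real.sqrt_mul (by positivity : (0 : ℝ) ≤ n + 1)]
      ring
  intro n
  refine ⟨even n, ?_⟩
  rw [LinearMap.comp_apply, hG1, map_smul, even, smul_smul, ← Complex.ofReal_neg,
    ← Complex.ofReal_mul]
  congr 2
  have hp := poch_nonneg hβ n
  rw [poch, ← mul_assoc (n.factorial : ℝ),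
    Real.sqrt_mul (by positivity : (0 : ℝ) ≤ n.factorial * poch β n)]
  ring
end
end

section
/- Fix real β > 0 and γ ∈ ℝ with γ ≠ 0, let p_n be the associated recurrence polynomials, and fix y ∈ ℝ. Define the complex sequence w_n = i^n · p_n(y) for n ∈ ℕ. Then w is a formal eigenvector of the momentum operator p̂ with eigenvalue y, componentwise: for every m ∈ ℕ, the e_m-component of p̂ applied formally to ∑_n w_n e_n equals y·w_m; explicitly, i·R_n w_{2n} − i·S_{n+1} w_{2n+2} = y·w_{2n+1} for all n ≥ 0, and i·S_n w_{2n−1} − i·R_n w_{2n+1} = y·w_{2n} for all n ≥ 0 (with the conventions w_{−1} = 0 and S_0 = 0). -/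
noncomputable section

/-! Multiplying the three-term recurrence for `p` at index `m` by `i ^ m` turns it into the
eigenvector equation for `w m = i ^ m * p m y`: the index shifts by `-1` and `+1` contribute
`i * i ^ (m - 1) = i ^ m` and `-i * i ^ (m + 1) = i ^ m`. -/

theorem stmt_19 (β γ : ℝ) (hβ : 0 < β) (hγ : γ ≠ 0)
    (p : ℕ → ℝ → ℝ)
    (hp0 : ∀ x : ℝ, p 0 x = 1)
    (hrec1 : ∀ (n : ℕ) (x : ℝ), x * p (2 * n) x =
      γ * Real.sqrt n * p (2 * n - 1) x + Real.sqrt (β + n) * p (2 * n + 1) x)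
    (hrec2 : ∀ (n : ℕ) (x : ℝ), x * p (2 * n + 1) x =
      Real.sqrt (β + n) * p (2 * n) x + γ * Real.sqrt (n + 1) * p (2 * n + 2) x)
    (y : ℝ) (w : ℕ → ℂ)
    (hw : ∀ n : ℕ, w n = Complex.I ^ n * (p n y : ℂ)) :
    (∀ n : ℕ,
      Complex.I * ((Real.sqrt (β + n) : ℝ) : ℂ) * w (2 * n) -
        Complex.I * ((γ * Real.sqrt (n + 1) : ℝ) : ℂ) * w (2 * n + 2)
      = (y : ℂ) * w (2 * n + 1)) ∧
    (∀ n : ℕ,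
      Complex.I * ((γ * Real.sqrt n : ℝ) : ℂ) * w (2 * n - 1) -
        Complex.I * ((Real.sqrt (β + n) : ℝ) : ℂ) * w (2 * n + 1)
      = (y : ℂ) * w (2 * n)) := by
  -- Complex forms of the two recurrences at `y`.
  have h1 : ∀ n : ℕ, (y : ℂ) * (p (2 * n) y : ℂ) =
      ((γ * Real.sqrt n : ℝ) : ℂ) * (p (2 * n - 1) y : ℂ) +
        ((Real.sqrt (β + n) : ℝ) : ℂ) * (p (2 * n + 1) y : ℂ) :=
    fun n => by exact_mod_cast hrec1 n y
  have h2 : ∀ n : ℕ, (y : ℂ) * (p (2 * n + 1) y : ℂ) =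
      ((Real.sqrt (β + n) : ℝ) : ℂ) * (p (2 * n) y : ℂ) +
        ((γ * Real.sqrt (n + 1) : ℝ) : ℂ) * (p (2 * n + 2) y : ℂ) :=
    fun n => by exact_mod_cast hrec2 n y
  refine ⟨fun n => ?_, fun n => ?_⟩
  · simp only [hw]
    linear_combination (-Complex.I ^ (2 * n + 1)) * h2 n -
      Complex.I ^ (2 * n + 1) * ((γ * Real.sqrt (n + 1) : ℝ) : ℂ) *
        (p (2 * n + 2) y : ℂ) * Complex.I_sq
  · simp only [hw]
    -- The truncated index `2 * n - 1` equals `0` at `n = 0`, but its coefficient `γ √0` vanishes.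
    have hS : Complex.I * ((γ * Real.sqrt n : ℝ) : ℂ) * Complex.I ^ (2 * n - 1) =
        ((γ * Real.sqrt n : ℝ) : ℂ) * Complex.I ^ (2 * n) := by
      rcases Nat.eq_zero_or_pos n with rfl | hn
      · simp
      · have hpow : Complex.I ^ (2 * n) = Complex.I ^ (2 * n - 1) * Complex.I := by
          rw [← pow_succ]
          congr 1
          omega
        rw [hpow]
        ring
    linear_combination (p (2 * n - 1) y : ℂ) * hS - Complex.I ^ (2 * n) * h1 n -
      Complex.I ^ (2 * n) * ((Real.sqrt (β + n) : ℝ) : ℂ) *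
        (p (2 * n + 1) y : ℂ) * Complex.I_sq
end
end
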